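/- arXiv:1810.08022 — 5 statements merged into one kernel-verified Lean document; each statement's English description precedes it below -/
import Mathlib

section
/- Let q ∈ ℂ be a primitive fourth root of unity (q = i or q = −i). For every integer k and every positive integer n the following identities hold in ℂ[x]: (1) d_{2n+1,4k}(x,q) = 0; (2) d_{2n,4k}(x,q) = 2^n · [∏_{l=1}^{2n−1} 4^{⌊l/2⌋}⌊l/2⌋!/l!] · q^n · ∏_{l=1}^{⌊n/2⌋}(x/2+2l+1/2)_{2n−4l+1} · ∏_{l=0}^{⌊(n−1)/2⌋}(x/2+2l+1/2)_{2n−4l−1}; (3) d_{n,4k+1}(x,q) = 2^{⌊n/2⌋} · [∏_{l=1}^{n−1} 4^{⌊l/2⌋}⌊l/2⌋!/l!] · ∏_{l=1}^{⌊n/2⌋}(x/2+l)_{n−2l+1}; (4) d_{n,4k+2}(x,q) = [∏_{l=1}^{n−1} 4^{⌊l/2⌋}⌊l/2⌋!/l!] · (1−q)^n · ∏_{l=1}^{⌊n/2⌋}(x/2+l+1/2)_l · ∏_{l=1}^{⌊(n−1)/2⌋}(x/2+l+1/2)_l, where (1−q)^n realizes (2q^{−1})^{n/2} since (1−q)² =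 2q^{−1}; (5) d_{n,4k+3}(x,q) = (−q)^n · d_{n,4k+1}(x,q). -/
open Polynomial Finset

noncomputable section

/-- The polynomial binomial coefficient binom(y, m) = y(y-1)⋯(y-m+1)/m! over a field F. -/
noncomputable def binomP (F : Type*) [Field F] (y : Polynomial F) (m : ℕ) : Polynomial F :=
  Polynomial.C ((m.factorial : F))⁻¹ * ∏ t ∈ Finset.range m, (y - (t : Polynomial F))

/-- a_m(q) for a numeric value q in a field: a_m = ∑_{l=0}^{m-1}(-q)^l for m > 0, a_0 = 0,
a_m = -∑_{l=1}^{-m}(-q)^{-l} for m < 0. -/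
noncomputable def aF (F : Type*) [Field F] (q : F) (m : ℤ) : F :=
  if 0 < m then ∑ l ∈ Finset.range m.toNat, (-q) ^ l
  else -∑ l ∈ Finset.range (-m).toNat, (-q) ^ (-(l + 1 : ℤ))

/-- d_{n,k}(x,q) ∈ F[x] for a numeric value q:
the determinant of the matrix with (1-based) (i,j) entry binom(x+i+j-2, j-1)·a_{j-i+k}(q). -/
noncomputable def dF (F : Type*) [Field F] (n : ℕ) (k : ℤ) (q : F) : Polynomial F :=
  Matrix.det (Matrix.of fun i j : Fin n =>
    binomP F (Polynomial.X + ((i : ℕ) : Polynomial F) + ((j : ℕ) : Polynomial F)) (j : ℕ) *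
      Polynomial.C (aF F q ((j : ℤ) - (i : ℤ) + k)))

/-- The Pochhammer symbol (y)_m = y(y+1)⋯(y+m-1) for m > 0, and (y)_m = 1 for m ≤ 0. -/
noncomputable def poch (y : Polynomial ℂ) (m : ℤ) : Polynomial ℂ :=
  ∏ t ∈ Finset.range m.toNat, (y + (t : Polynomial ℂ))

/-- x/2 as a polynomial. -/
noncomputable def halfX : Polynomial ℂ := Polynomial.C (2⁻¹ : ℂ) * Polynomial.X

/-- ∏_{l=1}^{m} 4^{⌊l/2⌋}·⌊l/2⌋!/l!. -/
noncomputable def prodFact4 (m : ℕ) : ℂ :=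
  ∏ l ∈ Finset.range m,
    (4 : ℂ) ^ ((l + 1) / 2) * (((l + 1) / 2).factorial : ℂ) / ((l + 1).factorial : ℂ)


/-- Row-reducing a family of linear functionals against polynomials of increasing degree. -/
theorem det_functional_polynomial {K : Type*} [Field K] (n : ℕ) (L : ℕ → K[X] →ₗ[K] K)
    (p : ℕ → K[X]) (hp : ∀ r, (p r).natDegree ≤ r) :
    (Matrix.of fun j r : Fin n => L j (p r)).det =
      (∏ r ∈ range n, (p r).coeff r) *
        (Matrix.of fun j r : Fin n => L j (X ^ (r : ℕ))).det := by
  have hfac : (Matrix.of fun j r : Fin n => L j (p r)) =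
      (Matrix.of fun j r : Fin n => L j (X ^ (r : ℕ))) *
        (Matrix.of fun s r : Fin n => (p r).coeff s) := by
    ext j r
    simp only [Matrix.mul_apply, Matrix.of_apply]
    conv_lhs => rw [(p r).as_sum_range_C_mul_X_pow' (lt_of_le_of_lt (hp r) r.2)]
    rw [Finset.sum_range, map_sum]
    refine Finset.sum_congr rfl fun s _ => ?_
    rw [← Polynomial.smul_eq_C_mul, map_smul, smul_eq_mul, mul_comm]
  have htri : (Matrix.of fun s r : Fin n => (p r).coeff s).det =
      ∏ r ∈ range n, (p r).coeff r := by
    rw [Matrix.det_of_isUpperTriangular, Finset.prod_range]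
    · rfl
    · intro s r hrs
      exact coeff_eq_zero_of_natDegree_lt (lt_of_le_of_lt (hp r) hrs)
  rw [hfac, Matrix.det_mul, htri, mul_comm]

/-- A determinant of moments of functionals triangular with respect to monic polynomials. -/
theorem det_functional_pow_of_triangular {K : Type*} [Field K] (n : ℕ)
    (L : ℕ → K[X] →ₗ[K] K) (p : ℕ → K[X]) (hp : ∀ r, (p r).natDegree = r)
    (hm : ∀ r, (p r).Monic) (hL : ∀ j r, j < r → L j (p r) = 0) :
    (Matrix.of fun j r : Fin n => L j (X ^ (r : ℕ))).det = ∏ j ∈ range n, L j (p j) := by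
  have h := det_functional_polynomial n L p fun r => (hp r).le
  have hone : ∏ r ∈ range n, (p r).coeff r = 1 :=
    Finset.prod_eq_one fun r _ => by
      have := hm r
      rwa [Monic, leadingCoeff, hp r] at this
  rw [hone, one_mul] at h
  rw [← h, Matrix.det_of_isLowerTriangular, Finset.prod_range]
  · rfl
  · intro j r hjr
    exact hL j r hjr

/-- The Vandermonde determinant with products over ranges. -/
theorem det_pow_eq_prod_range {K : Type*} [Field K] (n : ℕ) (v : ℕ → K) :
    (Matrix.of fun j r : Fin n => v j ^ (r : ℕ)).det =
      ∏ j ∈ range n, ∏ i ∈ range j, (v j - v i) := by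
  have h := det_functional_pow_of_triangular n (fun j => Polynomial.leval (v j))
    (fun r => ∏ i ∈ range r, (X - C (v i)))
    (fun r => by rw [natDegree_prod_of_monic _ _ fun i _ => monic_X_sub_C _]; simp)
    (fun r => monic_prod_of_monic _ _ fun i _ => monic_X_sub_C _)
    (fun j r hjr => by
      simp only [leval_apply, eval_prod]
      exact Finset.prod_eq_zero (mem_range.2 hjr) (by simp))
  simpa [leval_apply, eval_prod] using h

/-- The determinant of the checkerboard part of a Vandermonde matrix. -/
theorem det_checkerboard {K : Type*} [Field K] (n : ℕ) (v : ℕ → K) :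
    (Matrix.of fun j r : Fin n =>
        v j ^ (r : ℕ) * (1 + (-1) ^ ((j : ℕ) + (r : ℕ)))).det =
      ∏ j ∈ range n,
        (2 * ((∏ l ∈ range (j / 2), (v j ^ 2 - v (j % 2 + 2 * l) ^ 2)) * v j ^ (j % 2))) := by
  have hmonic : ∀ r : ℕ,
      (∏ l ∈ range (r / 2), (X ^ 2 - C (v (r % 2 + 2 * l) ^ 2)) : K[X]).Monic :=
    fun r => monic_prod_of_monic _ _ fun l _ => monic_X_pow_sub_C _ two_ne_zero
  have hsq : ∀ r : ℕ, (-1 : K) ^ (r % 2) = (-1) ^ r := fun r => (neg_one_pow_eq_pow_mod_two r).symm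
  have h := det_functional_pow_of_triangular n
    (fun j => Polynomial.leval (v j) + (-1 : K) ^ j • Polynomial.leval (-v j))
    (fun r => (∏ l ∈ range (r / 2), (X ^ 2 - C (v (r % 2 + 2 * l) ^ 2))) * X ^ (r % 2))
    (fun r => by
      rw [(hmonic r).natDegree_mul (monic_X_pow _),
        natDegree_prod_of_monic _ _ fun l _ => monic_X_pow_sub_C _ two_ne_zero]
      simp only [natDegree_X_pow_sub_C, sum_const, card_range, smul_eq_mul, natDegree_X_pow]
      omega)
    (fun r => (hmonic r).mul (monic_X_pow _))
    (fun j r hjr => by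
      simp only [LinearMap.add_apply, LinearMap.smul_apply, leval_apply, eval_mul, eval_prod,
        eval_sub, eval_pow, eval_X, eval_C, smul_eq_mul, neg_sq]
      rw [neg_pow (v j) (r % 2), hsq]
      by_cases hpar : j % 2 = r % 2
      · rw [Finset.prod_eq_zero (i := j / 2) (mem_range.2 (by omega))]
        · ring
        · rw [show r % 2 + 2 * (j / 2) = j by omega, sub_self]
      · have : (-1 : K) ^ j * (-1) ^ r = -1 := by
          rw [← pow_add, Odd.neg_one_pow]
          exact Nat.odd_iff.2 (by omega)
        linear_combination (∏ l ∈ range (r / 2), (v j ^ 2 - v (r % 2 + 2 * l) ^ 2)) *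
          v j ^ (r % 2) * this)
  convert h using 3 with j r j hj
  · ext j r
    simp only [LinearMap.add_apply, LinearMap.smul_apply, leval_apply, eval_pow, eval_X,
      smul_eq_mul, neg_pow (v j) (r : ℕ), pow_add]
    ring
  · simp only [LinearMap.add_apply, LinearMap.smul_apply, leval_apply, eval_mul, eval_prod,
      eval_sub, eval_pow, eval_X, eval_C, smul_eq_mul, neg_sq]
    rw [neg_pow (v j) (j % 2), hsq]
    have : (-1 : K) ^ j * (-1) ^ j = 1 := by rw [← mul_pow]; simp
    linear_combination -(∏ l ∈ range (j / 2), (v j ^ 2 - v (j % 2 + 2 * l) ^ 2)) *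
          v j ^ (j % 2) * this

theorem one_sub_mul_aF {F : Type*} [Field F] (q : F) (hq : q ≠ 0) (m : ℤ) :
    (1 - -q) * aF F q m = 1 - (-q) ^ m := by
  unfold aF
  split_ifs with hm
  · rw [mul_neg_geom_sum, ← zpow_natCast, Int.toNat_of_nonneg hm.le]
  · obtain ⟨M, rfl⟩ : ∃ M : ℕ, m = -M := ⟨(-m).toNat, by omega⟩
    rw [neg_neg, Int.toNat_natCast]
    have hw : -q ≠ 0 := neg_ne_zero.2 hq
    clear hm
    induction M with
    | zero => simp
    | succ M ih =>
      rw [Finset.sum_range_succ, neg_add, mul_add, ih]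
      have h : (-q) ^ (-(M : ℤ)) = (-q) ^ (-((M : ℤ) + 1)) * (-q) := by
        rw [← zpow_add_one₀ hw]
        congr 1
        ring
      push_cast
      rw [h]
      ring

theorem eval_binomP_neg (N i j : ℕ) (hi : i ≤ N) :
    eval (-((N : ℂ) + 1)) (binomP ℂ (X + (i : ℂ[X]) + (j : ℂ[X])) j) =
      (-1) ^ j * ((N - i).choose j : ℂ) := by
  have hfac : (j.factorial : ℂ) ≠ 0 := by exact_mod_cast j.factorial_ne_zero
  have hdesc : ((N - i).choose j : ℂ) =
      (j.factorial : ℂ)⁻¹ * ∏ s ∈ range j, (((N : ℂ) - i) - s) := by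
    rw [eq_inv_mul_iff_mul_eq₀ hfac, ← descPochhammer_eval_eq_prod_range, ← Nat.cast_sub hi,
      descPochhammer_eval_eq_descFactorial, Nat.descFactorial_eq_factorial_mul_choose]
    push_cast
    rfl
  rw [hdesc, binomP, eval_mul, eval_C, eval_prod, ← Finset.prod_range_reflect]
  rw [mul_left_comm]
  congr 1
  rw [← Finset.card_range j, ← Finset.prod_const, card_range, ← Finset.prod_mul_distrib]
  refine Finset.prod_congr rfl fun s hs => ?_
  have hs' := mem_range.1 hs
  rw [show j - 1 - s = j - (s + 1) by omega]
  simp only [eval_sub, eval_add, eval_X, eval_natCast]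
  rw [Nat.cast_sub (by omega)]
  push_cast
  ring

theorem coeff_one_sub_C_mul_X_pow {R : Type*} [CommRing R] (a : R) (m j : ℕ) :
    ((1 - C a * X : R[X]) ^ m).coeff j = (-a) ^ j * (m.choose j : R) := by
  have h : (1 - C a * X : R[X]) ^ m = ((1 + X) ^ m).comp (C (-a) * X) := by
    simp [sub_eq_add_neg]
  rw [h, comp_C_mul_X_coeff, coeff_one_add_X_pow, mul_comm]

/-- The binomial theorem, homogenized to total degree `N`. -/
theorem sum_choose_mul_pow_mul_pow {R : Type*} [CommRing R] (a b : R) (m N : ℕ) (h : m ≤ N) :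
    ∑ r ∈ range (N + 1), (m.choose r : R) * (a ^ (N - r) * b ^ r) =
      a ^ (N - m) * (a + b) ^ m := by
  rw [add_comm a b, add_pow, Finset.mul_sum]
  rw [← Finset.sum_subset (Finset.range_subset_range.2 (Nat.succ_le_succ h))]
  · refine Finset.sum_congr rfl fun r hr => ?_
    have hr' := mem_range.1 hr
    rw [show N - r = (N - m) + (m - r) by omega, pow_add]
    ring
  · intro r _ hr
    rw [Nat.choose_eq_zero_of_lt (by simpa using hr)]
    simp

/-- The binomial expansion of `(b - a) ^ i`, homogenized to total degree `N`. -/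
theorem sum_neg_one_choose_mul_pow {R : Type*} [CommRing R] (a b : R) (i n N : ℕ) (hi : i < n)
    (hn : n ≤ N) :
    ∑ l ∈ range n, (-1) ^ (i + l) * (i.choose l : R) * (a ^ (N - l) * b ^ l) =
      a ^ (N - i) * (b - a) ^ i := by
  rw [sub_eq_add_neg, add_pow, Finset.mul_sum]
  rw [← Finset.sum_subset (Finset.range_subset_range.2 hi)]
  · refine Finset.sum_congr rfl fun l hl => ?_
    have hl' := mem_range.1 hl
    obtain ⟨t, rfl⟩ : ∃ t, i = l + t := ⟨i - l, by omega⟩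
    rw [show N - l = (N - (l + t)) + t by omega, show l + t + l = t + 2 * l by ring, neg_pow a,
      Nat.add_sub_cancel_left, pow_add (-1 : R), pow_mul, pow_add a]
    simp only [neg_sq, one_pow]
    ring
  · intro r _ hr
    rw [Nat.choose_eq_zero_of_lt (by simpa using hr)]
    simp

/-- Expansion of the generating polynomial of a row of the binomial matrix. -/
theorem row_generating_polynomial (w : ℂ) (hw : w ^ 2 = -1) (k : ℤ) (i n N : ℕ) (hi : i < n)
    (hn : n ≤ N) :
    ∑ l ∈ range n, C ((w / (1 - w)) ^ i * ((-1) ^ (i + l) * (i.choose l : ℂ))) *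
      ∑ r ∈ range (N + 1),
        C (w⁻¹ ^ l * ((N - l).choose r : ℂ) - w ^ k * w ^ l * (l.choose r : ℂ)) *
          ((1 - C w * X) ^ (N - r) * (C (w - 1) * X) ^ r) =
      (1 - C 1 * X) ^ (N - i) - C (w ^ k * w⁻¹ ^ i) * (1 - C w * X) ^ (N - i) := by
  have hw0 : w ≠ 0 := by
    rintro rfl
    norm_num at hw
  have hw1 : 1 - w ≠ 0 := fun h => by
    rw [← sub_eq_zero.1 h] at hw
    norm_num at hw
  have hinv : w⁻¹ = -w := inv_eq_of_mul_eq_one_right (by linear_combination -hw)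
  have hAB : (1 - C w * X : ℂ[X]) + C (w - 1) * X = 1 - C 1 * X := by
    simp only [C_sub, C_1]
    ring
  have hinner : ∀ l ∈ range n, ∑ r ∈ range (N + 1),
      C (w⁻¹ ^ l * ((N - l).choose r : ℂ) - w ^ k * w ^ l * (l.choose r : ℂ)) *
          ((1 - C w * X) ^ (N - r) * (C (w - 1) * X) ^ r) =
      (1 - C 1 * X) ^ (N - l) * (C w⁻¹ * (1 - C w * X)) ^ l -
        C (w ^ k) * ((1 - C w * X) ^ (N - l) * (C w * (1 - C 1 * X)) ^ l) := by
    intro l hl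
    have hl' : l ≤ N := (mem_range.1 hl).le.trans hn
    have h₁ := sum_choose_mul_pow_mul_pow (1 - C w * X : ℂ[X]) (C (w - 1) * X) (N - l) N
      (Nat.sub_le _ _)
    have h₂ := sum_choose_mul_pow_mul_pow (1 - C w * X : ℂ[X]) (C (w - 1) * X) l N hl'
    rw [hAB] at h₁ h₂
    rw [Nat.sub_sub_self hl'] at h₁
    rw [mul_pow, mul_pow, ← C_pow, ← C_pow]
    calc _ = C (w⁻¹ ^ l) * (∑ r ∈ range (N + 1), ((N - l).choose r : ℂ[X]) *
            ((1 - C w * X) ^ (N - r) * (C (w - 1) * X) ^ r)) -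
          C (w ^ k) * C (w ^ l) * (∑ r ∈ range (N + 1), (l.choose r : ℂ[X]) *
            ((1 - C w * X) ^ (N - r) * (C (w - 1) * X) ^ r)) := by
          rw [Finset.mul_sum, Finset.mul_sum, ← Finset.sum_sub_distrib]
          refine Finset.sum_congr rfl fun r _ => ?_
          simp only [C_sub, C_mul, map_natCast]
          ring
      _ = _ := by
          rw [h₁, h₂]
          ring
  rw [Finset.sum_congr rfl fun l hl => by rw [hinner l hl]]
  have h₁ := sum_neg_one_choose_mul_pow (1 - C 1 * X : ℂ[X]) (C w⁻¹ * (1 - C w * X)) i n N hi hn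
  have h₂ := sum_neg_one_choose_mul_pow (1 - C w * X : ℂ[X]) (C w * (1 - C 1 * X)) i n N hi hn
  have e₁ : C w⁻¹ * (1 - C w * X) - (1 - C 1 * X) = C (w⁻¹ - 1) := by
    have : (C w⁻¹ * C w : ℂ[X]) = 1 := by rw [← C_mul, inv_mul_cancel₀ hw0, C_1]
    simp only [C_sub, C_1]
    linear_combination -X * this
  have e₂ : C w * (1 - C 1 * X) - (1 - C w * X) = C (w - 1) := by
    simp only [C_sub, C_1]
    ring
  rw [e₁] at h₁
  rw [e₂] at h₂
  have f₁ : C ((w / (1 - w)) ^ i) * C (w⁻¹ - 1) ^ i = 1 := by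
    rw [← C_pow, ← C_mul, ← mul_pow, show w / (1 - w) * (w⁻¹ - 1) = 1 by field_simp]
    simp
  have f₂ : C ((w / (1 - w)) ^ i) * C (w - 1) ^ i = C (w⁻¹ ^ i) := by
    rw [← C_pow, ← C_mul, ← mul_pow, show w / (1 - w) * (w - 1) = w⁻¹ by
      rw [hinv]
      field_simp
      ring]
  calc _ = C ((w / (1 - w)) ^ i) * (∑ l ∈ range n, (-1) ^ (i + l) * (i.choose l : ℂ[X]) *
          ((1 - C 1 * X) ^ (N - l) * (C w⁻¹ * (1 - C w * X)) ^ l)) -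
        C (w ^ k) * C ((w / (1 - w)) ^ i) *
          (∑ l ∈ range n, (-1) ^ (i + l) * (i.choose l : ℂ[X]) *
            ((1 - C w * X) ^ (N - l) * (C w * (1 - C 1 * X)) ^ l)) := by
        rw [Finset.mul_sum, Finset.mul_sum, ← Finset.sum_sub_distrib]
        refine Finset.sum_congr rfl fun r _ => ?_
        simp only [C_mul, map_natCast, C_pow, C_neg, C_1]
        ring
    _ = _ := by
        rw [h₁, h₂, C_mul]
        linear_combination (1 - C 1 * X) ^ (N - i) * f₁ -
          C (w ^ k) * (1 - C w * X) ^ (N - i) * f₂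

theorem eval_dF_neg_eq_det (q : ℂ) (hq : q ^ 2 = -1) (k : ℤ) (n N : ℕ) (hn : n ≤ N) :
    (1 + q) ^ n * eval (-((N : ℂ) + 1)) (dF ℂ n k q) =
      (∏ i ∈ range n, q ^ i) * (Matrix.of fun l r : Fin n =>
        (-q)⁻¹ ^ (l : ℕ) * ((N - l).choose r : ℂ) -
          (-q) ^ k * (-q) ^ (l : ℕ) * ((l : ℕ).choose r : ℂ)).det := by
  have hq0 : q ≠ 0 := by
    rintro rfl
    norm_num at hq
  have ha := one_sub_mul_aF q hq0
  have hq2 : 1 + q = 1 - -q := by ring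
  rw [hq2]
  obtain ⟨w, hw⟩ : ∃ w, w = -q := ⟨_, rfl⟩
  have hqw : q = -w := by rw [hw, neg_neg]
  rw [← hw] at ha ⊢
  have hw2 : w ^ 2 = -1 := by rw [hw, neg_sq, hq]
  have hw0 : w ≠ 0 := by rw [hw]; exact neg_ne_zero.2 hq0
  have hw1 : 1 - w ≠ 0 := fun h => by
    rw [← sub_eq_zero.1 h] at hw2
    norm_num at hw2
  set R : Matrix (Fin n) (Fin n) ℂ := Matrix.of fun i l =>
    (w / (1 - w)) ^ (i : ℕ) * ((-1) ^ ((i : ℕ) + l) * ((i : ℕ).choose l : ℂ)) with hR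
  set E : Matrix (Fin n) (Fin n) ℂ := Matrix.of fun l r =>
    w⁻¹ ^ (l : ℕ) * ((N - l).choose r : ℂ) -
      w ^ k * w ^ (l : ℕ) * ((l : ℕ).choose r : ℂ) with hE
  set T : Matrix (Fin n) (Fin n) ℂ := Matrix.of fun r j =>
    (((1 - C w * X) ^ (N - r) * (C (w - 1) * X) ^ (r : ℕ) : ℂ[X])).coeff j with hT
  have hTcoeff : ∀ r j : ℕ,
      (((1 - C w * X) ^ (N - r) * (C (w - 1) * X) ^ r : ℂ[X])).coeff j =
        if r ≤ j then (w - 1) ^ r * ((1 - C w * X : ℂ[X]) ^ (N - r)).coeff (j - r) else 0 := by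
    intro r j
    rw [mul_pow, ← C_pow, mul_left_comm, coeff_C_mul, coeff_mul_X_pow']
    split_ifs <;> simp
  have hRdet : R.det = ∏ i ∈ range n, (w / (1 - w)) ^ i := by
    rw [Matrix.det_of_isLowerTriangular, Finset.prod_range]
    · refine Finset.prod_congr rfl fun i _ => ?_
      simp [hR, ← two_mul]
    · intro i l hil
      simp [hR, Nat.choose_eq_zero_of_lt (show (i : ℕ) < l from hil)]
  have hTdet : T.det = ∏ i ∈ range n, (w - 1) ^ i := by
    rw [Matrix.det_of_isUpperTriangular, Finset.prod_range]
    · refine Finset.prod_congr rfl fun i _ => ?_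
      rw [hT, Matrix.of_apply, hTcoeff, if_pos le_rfl, Nat.sub_self, coeff_one_sub_C_mul_X_pow]
      simp
    · intro i j hij
      rw [hT, Matrix.of_apply, hTcoeff, if_neg (not_le.2 (show (j : ℕ) < i from hij))]
  have hfac : (Matrix.of fun i j : Fin n => (1 - w) *
      (((-1) ^ (j : ℕ) * ((N - i).choose j : ℂ)) * aF ℂ q ((j : ℤ) - (i : ℤ) + k))) =
      R * (E * T) := by
    ext i j
    have hrow := congrArg (fun p : ℂ[X] => p.coeff j)
      (row_generating_polynomial w hw2 k i n N i.2 hn)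
    simp only [finsetSum_coeff, coeff_C_mul, coeff_sub, coeff_one_sub_C_mul_X_pow] at hrow
    have hlhs : (1 - w) *
        (((-1) ^ (j : ℕ) * ((N - i).choose j : ℂ)) * aF ℂ q ((j : ℤ) - (i : ℤ) + k)) =
        (-1) ^ (j : ℕ) * ((N - i).choose j : ℂ) -
          w ^ k * w⁻¹ ^ (i : ℕ) * ((-w) ^ (j : ℕ) * ((N - i).choose j : ℂ)) := by
      have hz : w ^ ((j : ℤ) - (i : ℤ) + k) = w ^ (j : ℕ) * w⁻¹ ^ (i : ℕ) * w ^ k := by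
        rw [zpow_add₀ hw0, zpow_sub₀ hw0, inv_pow]
        simp [div_eq_mul_inv]
      rw [neg_pow w]
      linear_combination ((-1) ^ (j : ℕ) * ((N - i).choose j : ℂ)) *
        (ha ((j : ℤ) - (i : ℤ) + k)) - ((-1) ^ (j : ℕ) * ((N - i).choose j : ℂ)) * hz
    rw [Matrix.of_apply, hlhs, ← hrow, Finset.sum_range, Matrix.mul_apply]
    refine Finset.sum_congr rfl fun l _ => ?_
    rw [Matrix.mul_apply]
    simp only [hR, hE, hT, Matrix.of_apply]
    congr 1
    rw [Fin.sum_univ_eq_sum_range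
      (fun r => (w⁻¹ ^ (l : ℕ) * ((N - l).choose r : ℂ) -
        w ^ k * w ^ (l : ℕ) * ((l : ℕ).choose r : ℂ)) *
          (((1 - C w * X) ^ (N - r) * (C (w - 1) * X) ^ r : ℂ[X])).coeff j) n]
    symm
    refine Finset.sum_subset (Finset.range_subset_range.2 (by omega)) fun r _ hr => ?_
    rw [hTcoeff, if_neg (by have := mem_range.not.1 hr; omega), mul_zero]
  have hdet : (1 - w) ^ n * eval (-((N : ℂ) + 1)) (dF ℂ n k q) =
      (Matrix.of fun i j : Fin n => (1 - w) *
      (((-1) ^ (j : ℕ) * ((N - i).choose j : ℂ)) *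
        aF ℂ q ((j : ℤ) - (i : ℤ) + k))).det := by
    rw [dF, ← coe_evalRingHom, RingHom.map_det]
    set D := (evalRingHom (-((N : ℂ) + 1))).mapMatrix (Matrix.of fun i j : Fin n =>
      binomP ℂ (X + ((i : ℕ) : ℂ[X]) + ((j : ℕ) : ℂ[X])) (j : ℕ) *
        C (aF ℂ q ((j : ℤ) - (i : ℤ) + k))) with hD
    have hsmul : (Matrix.of fun i j : Fin n => (1 - w) *
        (((-1) ^ (j : ℕ) * ((N - i).choose j : ℂ)) * aF ℂ q ((j : ℤ) - (i : ℤ) + k))) =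
        (1 - w) • D := by
      ext i j
      simp only [hD, Matrix.smul_apply, RingHom.mapMatrix_apply, Matrix.map_apply,
        Matrix.of_apply, coe_evalRingHom, smul_eq_mul, eval_mul, eval_C]
      rw [eval_binomP_neg N i j (i.2.le.trans hn)]
    rw [hsmul, Matrix.det_smul, Fintype.card_fin]
  rw [hdet, hfac, Matrix.det_mul, Matrix.det_mul, hRdet, hTdet]
  rw [mul_comm E.det, ← mul_assoc, ← Finset.prod_mul_distrib]
  congr 1
  refine Finset.prod_congr rfl fun i _ => ?_
  rw [← mul_pow, hqw]
  congr 1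
  field_simp
  ring

theorem det_choose_sub_choose (w : ℂ) (hw : w ^ 2 = -1) (k : ℤ) (n N : ℕ) (hn : n ≤ N) :
    (∏ r ∈ range n, (r.factorial : ℂ)) * (Matrix.of fun l r : Fin n =>
        w⁻¹ ^ (l : ℕ) * ((N - l).choose r : ℂ) -
          w ^ k * w ^ (l : ℕ) * ((l : ℕ).choose r : ℂ)).det =
      (∏ r ∈ range n, w ^ r) * (Matrix.of fun j r : Fin n =>
        ((j : ℂ) - N / 2) ^ (r : ℕ) * (1 - w ^ k * (-1) ^ ((j : ℕ) + (r : ℕ)))).det := by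
  have hinv : w⁻¹ = -w := inv_eq_of_mul_eq_one_right (by linear_combination -hw)
  have hfac : ∀ r : ℕ, (r.factorial : ℂ) ≠ 0 := fun r => by exact_mod_cast r.factorial_ne_zero
  have hmonic : ∀ r : ℕ, ((descPochhammer ℂ r).comp (X + C ((N : ℂ) / 2))).Monic := fun r =>
    (monic_descPochhammer ℂ r).comp (monic_X_add_C _) (by simp)
  have hdeg : ∀ r : ℕ, ((descPochhammer ℂ r).comp (X + C ((N : ℂ) / 2))).natDegree = r :=
    fun r => by rw [natDegree_comp, natDegree_X_add_C, mul_one, descPochhammer_natDegree]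
  have heval : ∀ (y : ℂ) (m r : ℕ), y + N / 2 = m →
      eval y (C (r.factorial : ℂ)⁻¹ * (descPochhammer ℂ r).comp (X + C ((N : ℂ) / 2))) =
        (m.choose r : ℂ) := fun y m r h => by
    rw [eval_mul, eval_C, eval_comp, eval_add, eval_X, eval_C, h,
      descPochhammer_eval_eq_descFactorial, Nat.descFactorial_eq_factorial_mul_choose]
    push_cast
    rw [inv_mul_cancel_left₀ (hfac r)]
  have h := det_functional_polynomial n
    (fun l => w⁻¹ ^ l • leval ((N : ℂ) / 2 - l) - (w ^ k * w ^ l) • leval ((l : ℂ) - N / 2))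
    (fun r => C (r.factorial : ℂ)⁻¹ * (descPochhammer ℂ r).comp (X + C ((N : ℂ) / 2)))
    (fun r => (natDegree_C_mul_le _ _).trans (hdeg r).le)
  have hcoeff : ∏ r ∈ range n, (C (r.factorial : ℂ)⁻¹ *
      (descPochhammer ℂ r).comp (X + C ((N : ℂ) / 2))).coeff r =
      (∏ r ∈ range n, (r.factorial : ℂ))⁻¹ := by
    rw [← Finset.prod_inv_distrib]
    refine Finset.prod_congr rfl fun r _ => ?_
    have := hmonic r
    rw [Monic, leadingCoeff, hdeg r] at this
    rw [coeff_C_mul, this, mul_one]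
  rw [hcoeff] at h
  have hE : (Matrix.of fun l r : Fin n => w⁻¹ ^ (l : ℕ) * ((N - l).choose r : ℂ) -
      w ^ k * w ^ (l : ℕ) * ((l : ℕ).choose r : ℂ)) = Matrix.of fun l r : Fin n =>
      (w⁻¹ ^ (l : ℕ) • leval ((N : ℂ) / 2 - (l : ℕ)) -
        (w ^ k * w ^ (l : ℕ)) • leval (((l : ℕ) : ℂ) - N / 2))
      (C ((r : ℕ).factorial : ℂ)⁻¹ *
        (descPochhammer ℂ (r : ℕ)).comp (X + C ((N : ℂ) / 2))) := by
    ext l r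
    simp only [Matrix.of_apply, LinearMap.sub_apply, LinearMap.smul_apply, leval_apply,
      smul_eq_mul]
    rw [heval _ (N - l) r (by rw [Nat.cast_sub (l.2.le.trans hn)]; ring),
      heval _ l r (by ring)]
  rw [hE, h, mul_inv_cancel_left₀ (Finset.prod_ne_zero_iff.2 fun r _ => hfac r)]
  have hV : (Matrix.of fun l r : Fin n =>
      (w⁻¹ ^ (l : ℕ) • leval ((N : ℂ) / 2 - (l : ℕ)) -
        (w ^ k * w ^ (l : ℕ)) • leval (((l : ℕ) : ℂ) - N / 2)) (X ^ (r : ℕ))) =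
      Matrix.of fun l r : Fin n => (-1) ^ (r : ℕ) *
        (Matrix.of fun l r : Fin n => (-w) ^ (l : ℕ) * (Matrix.of fun j r : Fin n =>
          ((j : ℂ) - N / 2) ^ (r : ℕ) *
            (1 - w ^ k * (-1) ^ ((j : ℕ) + (r : ℕ)))) l r) l r := by
    ext l r
    simp only [Matrix.of_apply, LinearMap.sub_apply, LinearMap.smul_apply, leval_apply,
      smul_eq_mul, eval_pow, eval_X, hinv]
    rw [show (N : ℂ) / 2 - (l : ℕ) = -(((l : ℕ) : ℂ) - N / 2) by ring,
      neg_pow (((l : ℕ) : ℂ) - N / 2), neg_pow w, pow_add]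
    have h₁ : (-1 : ℂ) ^ (l : ℕ) * (-1) ^ (l : ℕ) = 1 := by rw [← mul_pow]; simp
    have h₂ : (-1 : ℂ) ^ (r : ℕ) * (-1) ^ (r : ℕ) = 1 := by rw [← mul_pow]; simp
    linear_combination (w ^ k * w ^ (l : ℕ) * (((l : ℕ) : ℂ) - N / 2) ^ (r : ℕ)) *
      (((-1 : ℂ) ^ (r : ℕ) * (-1) ^ (r : ℕ)) * h₁ + h₂)
  rw [hV, Matrix.det_mul_row, Matrix.det_mul_column, ← mul_assoc, ← Finset.prod_mul_distrib,
    Finset.prod_range]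
  congr 1
  refine Finset.prod_congr rfl fun r _ => ?_
  rw [← mul_pow]
  ring

/-- Reduction of `dF` at a primitive fourth root of unity to a signed Vandermonde matrix. -/
theorem eval_dF_eq_det (q : ℂ) (hq : q ^ 2 = -1) (k : ℤ) (n : ℕ) (x : ℂ) :
    (1 + q) ^ n * (∏ r ∈ range n, (r.factorial : ℂ)) * eval x (dF ℂ n k q) =
      (Matrix.of fun j r : Fin n => (x / 2 + 1 / 2 + (j : ℕ)) ^ (r : ℕ) *
        (1 - (-q) ^ k * (-1) ^ ((j : ℕ) + (r : ℕ)))).det := by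
  set P : ℂ[X] := C ((1 + q) ^ n * (∏ r ∈ range n, (r.factorial : ℂ))) * dF ℂ n k q with hP
  set Q : ℂ[X] := (Matrix.of fun j r : Fin n =>
    (C (1 / 2) * X + C (1 / 2 + ((j : ℕ) : ℂ))) ^ (r : ℕ) *
      C (1 - (-q) ^ k * (-1) ^ ((j : ℕ) + (r : ℕ)))).det with hQ
  have hQeval : ∀ y : ℂ, eval y Q = (Matrix.of fun j r : Fin n =>
      (y / 2 + 1 / 2 + (j : ℕ)) ^ (r : ℕ) *
        (1 - (-q) ^ k * (-1) ^ ((j : ℕ) + (r : ℕ)))).det := by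
    intro y
    rw [hQ, ← coe_evalRingHom, RingHom.map_det]
    congr 1
    ext j r
    simp only [RingHom.mapMatrix_apply, Matrix.map_apply, Matrix.of_apply, coe_evalRingHom,
      eval_mul, eval_pow, eval_add, eval_C, eval_X]
    ring
  have hPQ : P = Q := by
    refine eq_of_infinite_eval_eq P Q (Set.infinite_of_injective_forall_mem
      (f := fun t : ℕ => -(((n + t : ℕ) : ℂ) + 1)) (fun a b hab => ?_) fun t => ?_)
    · have : ((n + a : ℕ) : ℂ) = ((n + b : ℕ) : ℂ) := by simpa using hab
      have := Nat.cast_injective this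
      omega
    · have h₁ := eval_dF_neg_eq_det q hq k n (n + t) (Nat.le_add_right _ _)
      have h₂ := det_choose_sub_choose (-q) (by rw [neg_sq, hq]) k n (n + t)
        (Nat.le_add_right _ _)
      have hone : (∏ r ∈ range n, q ^ r) * (∏ r ∈ range n, (-q) ^ r) = 1 := by
        rw [← Finset.prod_mul_distrib]
        refine Finset.prod_eq_one fun r _ => ?_
        rw [← mul_pow, show q * -q = 1 by linear_combination -hq, one_pow]
      rw [Set.mem_ofPred_eq, hQeval, hP, eval_mul, eval_C]
      have hM : (Matrix.of fun j r : Fin n =>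
          (-(((n + t : ℕ) : ℂ) + 1) / 2 + 1 / 2 + (j : ℕ)) ^ (r : ℕ) *
            (1 - (-q) ^ k * (-1) ^ ((j : ℕ) + (r : ℕ)))) = Matrix.of fun j r : Fin n =>
          (((j : ℕ) : ℂ) - ((n + t : ℕ) : ℂ) / 2) ^ (r : ℕ) *
            (1 - (-q) ^ k * (-1) ^ ((j : ℕ) + (r : ℕ))) := by
        ext j r
        rw [Matrix.of_apply, Matrix.of_apply]
        congr 2
        ring
      rw [hM]
      linear_combination (∏ r ∈ range n, (r.factorial : ℂ)) * h₁ +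
        (∏ r ∈ range n, q ^ r) * h₂ + (Matrix.of fun j r : Fin n =>
          (((j : ℕ) : ℂ) - ((n + t : ℕ) : ℂ) / 2) ^ (r : ℕ) *
            (1 - (-q) ^ k * (-1) ^ ((j : ℕ) + (r : ℕ)))).det * hone
  rw [← hQeval, ← hPQ, hP, eval_mul, eval_C]

theorem prod_range_two_mul {M : Type*} [CommMonoid M] (f : ℕ → M) (m : ℕ) :
    ∏ s ∈ range (2 * m), f s = ∏ l ∈ range m, (f (2 * l) * f (2 * l + 1)) := by
  induction m with
  | zero => simp
  | succ m ih =>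
    rw [show 2 * (m + 1) = 2 * m + 1 + 1 by ring, Finset.prod_range_succ, Finset.prod_range_succ,
      Finset.prod_range_succ, ih, mul_assoc]

theorem prod_range_even_mul_odd {M : Type*} [CommMonoid M] (f : ℕ → M) (n : ℕ) :
    ∏ s ∈ range n, f s =
      (∏ l ∈ range ((n + 1) / 2), f (2 * l)) * ∏ l ∈ range (n / 2), f (2 * l + 1) := by
  obtain ⟨m, rfl | rfl⟩ := n.even_or_odd'
  · rw [prod_range_two_mul, Finset.prod_mul_distrib, show (2 * m + 1) / 2 = m by omega,
      show 2 * m / 2 = m by omega]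
  · rw [Finset.prod_range_succ, prod_range_two_mul, Finset.prod_mul_distrib,
      show (2 * m + 1 + 1) / 2 = m + 1 by omega, show (2 * m + 1) / 2 = m by omega,
      Finset.prod_range_succ]
    exact mul_right_comm _ _ _

/-- The antidiagonal checkerboard part of a Vandermonde matrix of odd size is singular. -/
theorem det_anti_checkerboard_odd (m : ℕ) (v : ℕ → ℂ) :
    (Matrix.of fun j r : Fin (2 * m + 1) =>
        v j ^ (r : ℕ) * (1 - (-1) ^ ((j : ℕ) + (r : ℕ)))).det = 0 := by
  set M : Matrix (Fin (2 * m + 1)) (Fin (2 * m + 1)) ℂ := Matrix.of fun j r =>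
    v j ^ (r : ℕ) * (1 - (-1) ^ ((j : ℕ) + (r : ℕ))) with hM
  have h : -M = Matrix.of fun j r : Fin (2 * m + 1) => (-1) ^ (r : ℕ) *
      (Matrix.of fun j r : Fin (2 * m + 1) => (-1) ^ (j : ℕ) * M j r) j r := by
    ext j r
    simp only [Matrix.neg_apply, hM, Matrix.of_apply, pow_add]
    have h₁ : (-1 : ℂ) ^ (j : ℕ) * (-1) ^ (j : ℕ) = 1 := by rw [← mul_pow]; simp
    have h₂ : (-1 : ℂ) ^ (r : ℕ) * (-1) ^ (r : ℕ) = 1 := by rw [← mul_pow]; simp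
    linear_combination v j ^ (r : ℕ) * ((-1 : ℂ) ^ (r : ℕ) * (-1) ^ (r : ℕ) * h₁ + h₂)
  have hdet := congrArg Matrix.det h
  rw [Matrix.det_neg, Matrix.det_mul_row, Matrix.det_mul_column, ← mul_assoc,
    ← Finset.prod_mul_distrib, Finset.prod_eq_one fun r _ => by rw [← mul_pow]; simp,
    Fintype.card_fin, pow_succ, pow_mul] at hdet
  norm_num at hdet
  exact self_eq_neg.1 hdet.symm

/-- The antidiagonal checkerboard part of a Vandermonde matrix of even size. -/
theorem det_anti_checkerboard_even (m : ℕ) (v : ℕ → ℂ) :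
    (Matrix.of fun j r : Fin (m * 2) =>
        v j ^ (r : ℕ) * (1 - (-1) ^ ((j : ℕ) + (r : ℕ)))).det =
      ∏ a ∈ range m, -(4 * (∏ l ∈ range a, (v (2 * a + 1) ^ 2 - v (2 * l + 1) ^ 2)) *
        ((∏ l ∈ range a, (v (2 * a) ^ 2 - v (2 * l) ^ 2)) * v (2 * a))) := by
  set M : Matrix (Fin (m * 2)) (Fin (m * 2)) ℂ := Matrix.of fun j r =>
    v j ^ (r : ℕ) * (1 - (-1) ^ ((j : ℕ) + (r : ℕ))) with hM
  set σ : Equiv.Perm (Fin (m * 2)) :=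
    finProdFinEquiv.permCongr (Equiv.prodCongrRight fun _ : Fin m => Equiv.swap (0 : Fin 2) 1)
    with hσ
  set u : ℕ → ℕ := fun j => if j % 2 = 0 then j + 1 else j - 1 with hu
  have hσval : ∀ j : Fin (m * 2), ((σ j : Fin (m * 2)) : ℕ) = u j := by
    intro j
    obtain ⟨⟨a, b⟩, rfl⟩ := finProdFinEquiv.surjective j
    fin_cases b
    · simp [hσ, hu, Equiv.permCongr_apply]
      omega
    · simp [hσ, hu, Equiv.permCongr_apply]
  have hsign : ((Equiv.Perm.sign σ : ℤ) : ℂ) = (-1) ^ m := by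
    rw [hσ, Equiv.Perm.sign_permCongr, Equiv.Perm.sign_prodCongrRight]
    simp
  have hperm := Matrix.det_permute σ M
  have hsub : M.submatrix σ id = Matrix.of fun j r : Fin (m * 2) =>
      v (u j) ^ (r : ℕ) * (1 + (-1) ^ ((j : ℕ) + (r : ℕ))) := by
    ext j r
    rw [Matrix.submatrix_apply, hM, Matrix.of_apply, Matrix.of_apply, hσval, id]
    congr 1
    rw [sub_eq_add_neg, pow_add, pow_add, ← neg_mul]
    congr 2
    simp only [hu]
    split_ifs with hj
    · rw [pow_succ]
      ring
    · obtain ⟨t, ht⟩ : ∃ t, (j : ℕ) = t + 1 := ⟨j - 1, by omega⟩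
      rw [ht, Nat.add_sub_cancel, pow_succ]
      ring
  have hcb := det_checkerboard (m * 2) fun j => v (u j)
  rw [hsub, hcb, hsign] at hperm
  have hM' : M.det = (-1) ^ m * ((-1) ^ m * M.det) := by
    rw [← mul_assoc, ← mul_pow]
    simp
  rw [hM', ← hperm, mul_comm m 2, prod_range_two_mul]
  conv_lhs => rw [← Finset.card_range m, ← Finset.prod_const]
  rw [card_range, ← Finset.prod_mul_distrib]
  refine Finset.prod_congr rfl fun a _ => ?_
  have hu₀ : ∀ l, u (2 * l) = 2 * l + 1 := fun l => by simp [hu]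
  have hu₁ : ∀ l, u (2 * l + 1) = 2 * l := fun l => by simp [hu]
  simp only [show 2 * a / 2 = a by omega, show (2 * a + 1) / 2 = a by omega,
    show 2 * a % 2 = 0 by omega, show (2 * a + 1) % 2 = 1 by omega, hu₀, hu₁, zero_add,
    Nat.add_comm 1]
  ring

/-- The signed Vandermonde determinant at a fourth root of unity. -/
theorem det_twisted_vandermonde (w : ℂ) (hw : w ^ 2 = -1) (n : ℕ) (v : ℕ → ℂ) :
    (Matrix.of fun j r : Fin n =>
        v j ^ (r : ℕ) * (1 - w * (-1) ^ ((j : ℕ) + (r : ℕ)))).det =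
      ∏ j ∈ range n, ((1 - w) * (-1) ^ j *
        ∏ i ∈ range j, ((-1) ^ j * v j - (-1) ^ i * v i)) := by
  have hfac : (Matrix.of fun j r : Fin n =>
      v j ^ (r : ℕ) * (1 - w * (-1) ^ ((j : ℕ) + (r : ℕ)))) =
      Matrix.of fun j r : Fin n => w ^ ((r : ℕ) % 2) * (Matrix.of fun j r : Fin n =>
        ((1 - w) * w ^ ((j : ℕ) % 2)) * (Matrix.of fun j r : Fin n =>
          ((-1) ^ (j : ℕ) * v j) ^ (r : ℕ)) j r) j r := by
    ext j r
    simp only [Matrix.of_apply]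
    generalize (j : ℕ) = a
    generalize (r : ℕ) = b
    rw [mul_pow]
    obtain ⟨s, rfl | rfl⟩ := a.even_or_odd' <;> obtain ⟨t, rfl | rfl⟩ := b.even_or_odd' <;>
      simp [pow_add, pow_mul, Nat.add_mod]
    · ring
    · linear_combination v (2 * s) ^ (2 * t) * v (2 * s) * hw
    · linear_combination v (2 * s + 1) ^ (2 * t) * hw
    · linear_combination (1 - w) * v (2 * s + 1) ^ (2 * t) * v (2 * s + 1) * hw
  rw [hfac, Matrix.det_mul_row, Matrix.det_mul_column,
    det_pow_eq_prod_range n fun j => (-1) ^ j * v j, Finset.prod_range, Finset.prod_range,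
    ← mul_assoc, ← Finset.prod_mul_distrib, ← Finset.prod_mul_distrib]
  refine Finset.prod_congr rfl fun j _ => ?_
  congr 1
  generalize (j : ℕ) = a
  obtain ⟨s, rfl | rfl⟩ := a.even_or_odd' <;> simp [pow_add, pow_mul, Nat.add_mod]
  linear_combination (1 - w) * hw

theorem det_twisted_neg (w : ℂ) (hw : w ^ 2 = -1) (n : ℕ) (v : ℕ → ℂ) :
    (Matrix.of fun j r : Fin n =>
        v j ^ (r : ℕ) * (1 - -w * (-1) ^ ((j : ℕ) + (r : ℕ)))).det =
      w ^ n * (Matrix.of fun j r : Fin n =>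
        v j ^ (r : ℕ) * (1 - w * (-1) ^ ((j : ℕ) + (r : ℕ)))).det := by
  have hfac : (Matrix.of fun j r : Fin n =>
      v j ^ (r : ℕ) * (1 - -w * (-1) ^ ((j : ℕ) + (r : ℕ)))) =
      Matrix.of fun j r : Fin n => (-1) ^ (r : ℕ) * (Matrix.of fun j r : Fin n =>
        (w * (-1) ^ (j : ℕ)) * (Matrix.of fun j r : Fin n =>
          v j ^ (r : ℕ) * (1 - w * (-1) ^ ((j : ℕ) + (r : ℕ)))) j r) j r := by
    ext j r
    simp only [Matrix.of_apply, pow_add]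
    have h₁ : (-1 : ℂ) ^ (j : ℕ) * (-1) ^ (j : ℕ) = 1 := by rw [← mul_pow]; simp
    have h₂ : (-1 : ℂ) ^ (r : ℕ) * (-1) ^ (r : ℕ) = 1 := by rw [← mul_pow]; simp
    linear_combination v j ^ (r : ℕ) * (hw * ((-1 : ℂ) ^ (j : ℕ) * (-1) ^ (j : ℕ)) *
      ((-1 : ℂ) ^ (r : ℕ) * (-1) ^ (r : ℕ)) - ((-1 : ℂ) ^ (r : ℕ) * (-1) ^ (r : ℕ)) * h₁ - h₂)
  rw [hfac, Matrix.det_mul_row, Matrix.det_mul_column, ← mul_assoc, ← Finset.prod_mul_distrib]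
  congr 1
  conv_rhs => rw [← Fintype.card_fin n, ← Finset.card_univ, ← Finset.prod_const]
  refine Finset.prod_congr rfl fun r _ => ?_
  have h₂ : (-1 : ℂ) ^ (r : ℕ) * (-1) ^ (r : ℕ) = 1 := by rw [← mul_pow]; simp
  linear_combination w * h₂

theorem prodFact4_mul_factorial (n : ℕ) :
    prodFact4 n * (n.factorial : ℂ) =
      prodFact4 (n - 1) * (4 ^ (n / 2) * ((n / 2).factorial : ℂ)) := by
  cases n with
  | zero => simp [prodFact4]
  | succ n =>
    have hfac : ((n + 1).factorial : ℂ) ≠ 0 := by exact_mod_cast (n + 1).factorial_ne_zero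
    rw [Nat.add_sub_cancel, prodFact4, Finset.prod_range_succ, ← prodFact4]
    field_simp

theorem eval_poch (x a : ℂ) (m : ℤ) :
    eval x (poch (halfX + C a) m) = ∏ t ∈ range m.toNat, (x / 2 + a + t) := by
  rw [poch, eval_prod]
  refine Finset.prod_congr rfl fun t _ => ?_
  simp only [halfX, eval_add, eval_mul, eval_C, eval_X, eval_natCast]
  ring

theorem prod_range_natCast_sub (m : ℕ) :
    ∏ l ∈ range m, ((m : ℂ) - l) = (m.factorial : ℂ) := by
  rw [← descPochhammer_eval_eq_prod_range, descPochhammer_eval_eq_descFactorial,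
    Nat.descFactorial_self]

theorem prod_range_sq_sub_sq (s : ℂ) (m : ℕ) :
    ∏ l ∈ range m, ((s + 2 * m) ^ 2 - (s + 2 * l) ^ 2) =
      4 ^ m * (m.factorial : ℂ) * ∏ l ∈ range m, (s + m + l) := by
  rw [← prod_range_natCast_sub]
  conv_rhs => rw [← Finset.card_range m, ← Finset.prod_const]
  rw [card_range, ← Finset.prod_mul_distrib, ← Finset.prod_mul_distrib]
  exact Finset.prod_congr rfl fun l _ => by ring

/-- The last row of the signed Vandermonde product with nodes `x / 2 + 1 / 2 + j`. -/
theorem prod_range_signed_sub (x : ℂ) (n : ℕ) :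
    (-1) ^ n * ∏ i ∈ range n,
        ((-1) ^ n * (x / 2 + 1 / 2 + n) - (-1) ^ i * (x / 2 + 1 / 2 + i)) =
      2 ^ ((n + 1) / 2) * 2 ^ (n / 2) * ((n / 2).factorial : ℂ) *
        ∏ l ∈ range ((n + 1) / 2), (x / 2 + n - l) := by
  have hterm : ∀ t ∈ range n, ((-1) ^ n * (x / 2 + 1 / 2 + n) -
      (-1) ^ (n - 1 - t) * (x / 2 + 1 / 2 + (n - 1 - t : ℕ)) : ℂ) =
      (-1) ^ n * ((x / 2 + 1 / 2 + n) + (-1) ^ t * (x / 2 + 1 / 2 + (n - (t + 1)))) := by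
    intro t ht
    obtain ⟨d, rfl⟩ : ∃ d, n = d + (t + 1) := ⟨n - (t + 1), by have := mem_range.1 ht; omega⟩
    rw [show d + (t + 1) - 1 - t = d by omega]
    push_cast
    have h : (-1 : ℂ) ^ t * (-1) ^ t = 1 := by rw [← mul_pow]; simp
    rw [pow_add, pow_succ]
    linear_combination (-1) ^ d * (x / 2 + 1 / 2 + d) * h
  have hsign : (-1 : ℂ) ^ n * ∏ _t ∈ range n, (-1 : ℂ) ^ n = 1 := by
    rw [Finset.prod_const, card_range, ← pow_mul, ← pow_add, Even.neg_one_pow]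
    have := Nat.even_mul_succ_self n
    rwa [show n + n * n = n * (n + 1) by ring]
  rw [← Finset.prod_range_reflect, Finset.prod_congr rfl hterm, Finset.prod_mul_distrib,
    ← mul_assoc, hsign, one_mul, prod_range_even_mul_odd]
  have heven : ∏ l ∈ range ((n + 1) / 2), ((x / 2 + 1 / 2 + n) +
      (-1) ^ (2 * l) * (x / 2 + 1 / 2 + (n - ((2 * l : ℕ) + 1))) : ℂ) =
      2 ^ ((n + 1) / 2) * ∏ l ∈ range ((n + 1) / 2), (x / 2 + n - l) := by
    conv_rhs => rw [← Finset.card_range ((n + 1) / 2), ← Finset.prod_const]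
    rw [card_range, ← Finset.prod_mul_distrib]
    refine Finset.prod_congr rfl fun l _ => ?_
    rw [pow_mul]
    push_cast
    ring
  have hodd : ∏ l ∈ range (n / 2), ((x / 2 + 1 / 2 + n) +
      (-1) ^ (2 * l + 1) * (x / 2 + 1 / 2 + (n - ((2 * l + 1 : ℕ) + 1))) : ℂ) =
      2 ^ (n / 2) * ((n / 2).factorial : ℂ) := by
    rw [← Finset.prod_range_add_one_eq_factorial]
    conv_rhs => rw [← Finset.card_range (n / 2), ← Finset.prod_const]
    rw [card_range]
    push_cast
    rw [← Finset.prod_mul_distrib]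
    refine Finset.prod_congr rfl fun l _ => ?_
    rw [pow_succ, pow_mul]
    ring
  rw [heven, hodd]
  ring

theorem prod_poch_one_succ (x : ℂ) (n : ℕ) :
    ∏ l ∈ range ((n + 1) / 2), ∏ t ∈ range (((n + 1 : ℕ) : ℤ) - 2 * l - 1).toNat,
        (x / 2 + ((l : ℂ) + 1) + t) =
      (∏ l ∈ range (n / 2), ∏ t ∈ range ((n : ℤ) - 2 * l - 1).toNat,
        (x / 2 + ((l : ℂ) + 1) + t)) * ∏ l ∈ range ((n + 1) / 2), (x / 2 + n - l) := by
  have hext : ∏ l ∈ range (n / 2), ∏ t ∈ range ((n : ℤ) - 2 * l - 1).toNat,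
        (x / 2 + ((l : ℂ) + 1) + t) =
      ∏ l ∈ range ((n + 1) / 2), ∏ t ∈ range ((n : ℤ) - 2 * l - 1).toNat,
        (x / 2 + ((l : ℂ) + 1) + t) := by
    refine Finset.prod_subset (Finset.range_subset_range.2 (by omega)) fun l hl hl' => ?_
    have h₁ := mem_range.1 hl
    have h₂ := mem_range.not.1 hl'
    rw [show ((n : ℤ) - 2 * l - 1).toNat = 0 by omega]
    simp
  rw [hext, ← Finset.prod_mul_distrib]
  refine Finset.prod_congr rfl fun l hl => ?_
  have h₁ := mem_range.1 hl
  obtain ⟨d, rfl⟩ : ∃ d, n = d + 2 * l + 1 := ⟨n - (2 * l + 1), by omega⟩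
  rw [show (((d + 2 * l + 1 + 1 : ℕ) : ℤ) - 2 * l - 1).toNat = d + 1 by omega,
    show (((d + 2 * l + 1 : ℕ) : ℤ) - 2 * l - 1).toNat = d by omega, Finset.prod_range_succ]
  push_cast
  ring

theorem closed_form_one (q x : ℂ) (n : ℕ) :
    (1 + q) ^ n * (∏ r ∈ range n, (r.factorial : ℂ)) * (2 ^ (n / 2) * prodFact4 (n - 1) *
        ∏ l ∈ range (n / 2), ∏ t ∈ range ((n : ℤ) - 2 * l - 1).toNat,
          (x / 2 + ((l : ℂ) + 1) + t)) =
      ∏ j ∈ range n, ((1 - -q) * (-1) ^ j * ∏ i ∈ range j,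
        ((-1) ^ j * (x / 2 + 1 / 2 + j) - (-1) ^ i * (x / 2 + 1 / 2 + i))) := by
  induction n with
  | zero => simp [prodFact4]
  | succ n ih =>
    rw [Finset.prod_range_succ, Finset.prod_range_succ, ← ih, prod_poch_one_succ,
      mul_assoc (1 - -q), prod_range_signed_sub, Nat.add_sub_cancel]
    have h := prodFact4_mul_factorial n
    rw [show (4 : ℂ) = 2 * 2 by norm_num, mul_pow] at h
    set B := ∏ l ∈ range (n / 2), ∏ t ∈ range ((n : ℤ) - 2 * l - 1).toNat,
      (x / 2 + ((l : ℂ) + 1) + t)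
    set S := ∏ l ∈ range ((n + 1) / 2), (x / 2 + (n : ℂ) - l)
    set Φ := ∏ r ∈ range n, (r.factorial : ℂ)
    rw [pow_succ]
    linear_combination (1 + q) ^ n * (1 + q) * Φ * 2 ^ ((n + 1) / 2) * B * S * h

theorem closed_form_two (q x : ℂ) (hq : q ^ 2 = -1) (n : ℕ) :
    (1 + q) ^ n * (∏ r ∈ range n, (r.factorial : ℂ)) * (prodFact4 (n - 1) * (1 - q) ^ n *
        (∏ l ∈ range (n / 2), ∏ t ∈ range ((l : ℤ) + 1).toNat,
          (x / 2 + ((l : ℂ) + 3 / 2) + t)) *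
        (∏ l ∈ range ((n - 1) / 2), ∏ t ∈ range ((l : ℤ) + 1).toNat,
          (x / 2 + ((l : ℂ) + 3 / 2) + t))) =
      ∏ j ∈ range n, (2 * ((∏ l ∈ range (j / 2), ((x / 2 + 1 / 2 + (j : ℂ)) ^ 2 -
        (x / 2 + 1 / 2 + ((j % 2 + 2 * l : ℕ) : ℂ)) ^ 2)) *
          (x / 2 + 1 / 2 + (j : ℂ)) ^ (j % 2))) := by
  induction n with
  | zero => simp [prodFact4]
  | succ n ih =>
    rw [Finset.prod_range_succ, Finset.prod_range_succ, ← ih, Nat.add_sub_cancel]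
    have h := prodFact4_mul_factorial n
    set Φ := ∏ r ∈ range n, (r.factorial : ℂ)
    clear_value Φ
    clear ih
    have htoNat : ∀ l : ℕ, ((l : ℤ) + 1).toNat = l + 1 := fun l => by omega
    simp only [htoNat]
    obtain ⟨m, rfl | rfl⟩ := n.even_or_odd'
    · have hs := prod_range_sq_sub_sq (x / 2 + 1 / 2) m
      simp only [show 2 * m / 2 = m by omega, show (2 * m + 1) / 2 = m by omega,
        show 2 * m % 2 = 0 by omega, zero_add, pow_zero, mul_one] at h ⊢
      push_cast
      rw [hs]
      have hstep : ∏ l ∈ range m, ∏ t ∈ range (l + 1), (x / 2 + ((l : ℂ) + 3 / 2) + t) =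
          (∏ l ∈ range ((2 * m - 1) / 2), ∏ t ∈ range (l + 1),
            (x / 2 + ((l : ℂ) + 3 / 2) + t)) * ∏ l ∈ range m, (x / 2 + 1 / 2 + (m : ℂ) + l) := by
        cases m with
        | zero => simp
        | succ m =>
          rw [show (2 * (m + 1) - 1) / 2 = m by omega, Finset.prod_range_succ]
          congr 1
          refine Finset.prod_congr rfl fun t _ => ?_
          push_cast
          ring
      set A := ∏ l ∈ range m, ∏ t ∈ range (l + 1), (x / 2 + ((l : ℂ) + 3 / 2) + t)
      set B := ∏ l ∈ range ((2 * m - 1) / 2), ∏ t ∈ range (l + 1),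
        (x / 2 + ((l : ℂ) + 3 / 2) + t)
      set S := ∏ l ∈ range m, (x / 2 + 1 / 2 + (m : ℂ) + l)
      clear_value A B S
      rw [hstep, pow_succ, pow_succ]
      linear_combination (1 + q) ^ (2 * m) * (1 - q) ^ (2 * m) * Φ * B * S * B * S *
        ((1 - q ^ 2) * h - prodFact4 (2 * m - 1) * (4 ^ m * (m.factorial : ℂ)) * hq)
    · have hs := prod_range_sq_sub_sq (x / 2 + 1 / 2 + 1) m
      simp only [show (2 * m + 1) / 2 = m by omega, show (2 * m + 1 + 1) / 2 = m + 1 by omega,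
        show (2 * m + 1) % 2 = 1 by omega, Nat.add_sub_cancel, show 2 * m / 2 = m by omega,
        pow_one] at h ⊢
      push_cast
      have hs' : ∏ l ∈ range m, ((x / 2 + 1 / 2 + (2 * (m : ℂ) + 1)) ^ 2 -
          (x / 2 + 1 / 2 + (1 + 2 * (l : ℂ))) ^ 2) =
          4 ^ m * (m.factorial : ℂ) * ∏ l ∈ range m, (x / 2 + ((m : ℂ) + 3 / 2) + l) := by
        convert hs using 2
        · ring
        · exact Finset.prod_congr rfl fun l _ => by ring
      rw [hs', Finset.prod_range_succ _ m, Finset.prod_range_succ _ m]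
      set A := ∏ l ∈ range m, ∏ t ∈ range (l + 1), (x / 2 + ((l : ℂ) + 3 / 2) + t)
      set S := ∏ l ∈ range m, (x / 2 + ((m : ℂ) + 3 / 2) + l)
      clear_value A S
      rw [pow_succ _ (2 * m + 1), pow_succ _ (2 * m + 1)]
      linear_combination (1 + q) ^ (2 * m + 1) * (1 - q) ^ (2 * m + 1) * Φ * A * A * S *
        (x / 2 + ((m : ℂ) + 3 / 2) + m) *
        ((1 - q ^ 2) * h - prodFact4 (2 * m) * (4 ^ m * (m.factorial : ℂ)) * hq)

theorem prod_range_add_reflect (z : ℂ) (m : ℕ) :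
    ∏ l ∈ range (m + 1), (z + m + l) = ∏ s ∈ range (m + 1), (z + 2 * m - s) := by
  rw [← Finset.prod_range_reflect]
  refine Finset.prod_congr rfl fun s hs => ?_
  rw [show m + 1 - 1 - s = m - s by omega,
    Nat.cast_sub (Nat.lt_succ_iff.1 (mem_range.1 hs))]
  ring

theorem prod_range_succ_add_reflect (z : ℂ) (m : ℕ) :
    ∏ l ∈ range m, (z + 1 + m + l) = ∏ s ∈ range m, (z + 2 * m - s) := by
  rw [← Finset.prod_range_reflect]
  refine Finset.prod_congr rfl fun s hs => ?_
  have := mem_range.1 hs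
  rw [show m - 1 - s = m - (s + 1) by omega, Nat.cast_sub (by omega)]
  push_cast
  ring

theorem prod_poch_zero_even_succ (x : ℂ) (m : ℕ) :
    ∏ l ∈ range ((m + 1) / 2), ∏ t ∈ range ((2 * (m + 1 : ℕ) : ℤ) - 4 * l - 3).toNat,
        (x / 2 + (2 * ((l : ℂ) + 1) + 1 / 2) + t) =
      (∏ l ∈ range (m / 2), ∏ t ∈ range ((2 * m : ℤ) - 4 * l - 3).toNat,
        (x / 2 + (2 * ((l : ℂ) + 1) + 1 / 2) + t)) *
        ∏ s ∈ range m, (x / 2 + 1 / 2 + 2 * m - s) := by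
  have hstep : ∀ l ∈ range (m / 2),
      ∏ t ∈ range ((2 * (m + 1 : ℕ) : ℤ) - 4 * l - 3).toNat,
        (x / 2 + (2 * ((l : ℂ) + 1) + 1 / 2) + t) =
      (∏ t ∈ range ((2 * m : ℤ) - 4 * l - 3).toNat,
        (x / 2 + (2 * ((l : ℂ) + 1) + 1 / 2) + t)) *
        ((x / 2 + 1 / 2 + 2 * m - (2 * l : ℕ)) * (x / 2 + 1 / 2 + 2 * m - (2 * l + 1 : ℕ))) := by
    intro l hl
    have h₁ := mem_range.1 hl
    obtain ⟨d, rfl⟩ : ∃ d, m = d + 2 * l + 2 := ⟨m - (2 * l + 2), by omega⟩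
    rw [show ((2 * (d + 2 * l + 2 + 1 : ℕ) : ℤ) - 4 * l - 3).toNat = 2 * d + 1 + 1 + 1 by omega,
      show ((2 * (d + 2 * l + 2 : ℕ) : ℤ) - 4 * l - 3).toNat = 2 * d + 1 by omega,
      Finset.prod_range_succ, Finset.prod_range_succ _ (2 * d + 1)]
    push_cast
    ring
  obtain ⟨b, rfl | rfl⟩ := m.even_or_odd'
  · rw [show (2 * b + 1) / 2 = 2 * b / 2 by omega, Finset.prod_congr rfl hstep,
      Finset.prod_mul_distrib]
    congr 1
    rw [prod_range_two_mul, show 2 * b / 2 = b by omega]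
  · rw [show (2 * b + 1 + 1) / 2 = (2 * b + 1) / 2 + 1 by omega, Finset.prod_range_succ,
      Finset.prod_congr rfl hstep, Finset.prod_mul_distrib, mul_assoc]
    congr 1
    rw [Finset.prod_range_succ, prod_range_two_mul, show (2 * b + 1) / 2 = b by omega,
      show ((2 * (2 * b + 1 + 1 : ℕ) : ℤ) - 4 * b - 3).toNat = 1 by omega]
    congr 1
    rw [Finset.prod_range_one]
    push_cast
    ring

theorem prod_poch_zero_odd_succ (x : ℂ) (m : ℕ) :
    ∏ l ∈ range ((m + 1 + 1) / 2), ∏ t ∈ range ((2 * (m + 1 : ℕ) : ℤ) - 4 * l - 1).toNat,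
        (x / 2 + (2 * (l : ℂ) + 1 / 2) + t) =
      (∏ l ∈ range ((m + 1) / 2), ∏ t ∈ range ((2 * m : ℤ) - 4 * l - 1).toNat,
        (x / 2 + (2 * (l : ℂ) + 1 / 2) + t)) *
        ∏ s ∈ range (m + 1), (x / 2 + 1 / 2 + 2 * m - s) := by
  have hstep : ∀ l ∈ range ((m + 1) / 2),
      ∏ t ∈ range ((2 * (m + 1 : ℕ) : ℤ) - 4 * l - 1).toNat,
        (x / 2 + (2 * (l : ℂ) + 1 / 2) + t) =
      (∏ t ∈ range ((2 * m : ℤ) - 4 * l - 1).toNat,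
        (x / 2 + (2 * (l : ℂ) + 1 / 2) + t)) *
        ((x / 2 + 1 / 2 + 2 * m - (2 * l : ℕ)) * (x / 2 + 1 / 2 + 2 * m - (2 * l + 1 : ℕ))) := by
    intro l hl
    have h₁ := mem_range.1 hl
    obtain ⟨d, rfl⟩ : ∃ d, m = d + 2 * l + 1 := ⟨m - (2 * l + 1), by omega⟩
    rw [show ((2 * (d + 2 * l + 1 + 1 : ℕ) : ℤ) - 4 * l - 1).toNat = 2 * d + 1 + 1 + 1 by omega,
      show ((2 * (d + 2 * l + 1 : ℕ) : ℤ) - 4 * l - 1).toNat = 2 * d + 1 by omega,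
      Finset.prod_range_succ, Finset.prod_range_succ _ (2 * d + 1)]
    push_cast
    ring
  obtain ⟨b, rfl | rfl⟩ := m.even_or_odd'
  · rw [show (2 * b + 1 + 1) / 2 = (2 * b + 1) / 2 + 1 by omega, Finset.prod_range_succ,
      Finset.prod_congr rfl hstep, Finset.prod_mul_distrib, mul_assoc]
    congr 1
    rw [Finset.prod_range_succ, prod_range_two_mul, show (2 * b + 1) / 2 = b by omega,
      show ((2 * (2 * b + 1 : ℕ) : ℤ) - 4 * b - 1).toNat = 1 by omega]
    congr 1
    rw [Finset.prod_range_one]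
    push_cast
    ring
  · rw [show (2 * b + 1 + 1 + 1) / 2 = (2 * b + 1 + 1) / 2 by omega,
      Finset.prod_congr rfl hstep, Finset.prod_mul_distrib]
    congr 1
    rw [show 2 * b + 1 + 1 = 2 * (b + 1) by ring, prod_range_two_mul,
      show 2 * (b + 1) / 2 = b + 1 by omega]

theorem closed_form_zero (q x : ℂ) (hq : q ^ 2 = -1) (m : ℕ) :
    (1 + q) ^ (2 * m) * (∏ r ∈ range (2 * m), (r.factorial : ℂ)) *
        (2 ^ m * prodFact4 (2 * m - 1) * q ^ m *
        (∏ l ∈ range (m / 2), ∏ t ∈ range ((2 * m : ℤ) - 4 * l - 3).toNat,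
          (x / 2 + (2 * ((l : ℂ) + 1) + 1 / 2) + t)) *
        (∏ l ∈ range ((m + 1) / 2), ∏ t ∈ range ((2 * m : ℤ) - 4 * l - 1).toNat,
          (x / 2 + (2 * (l : ℂ) + 1 / 2) + t))) =
      ∏ a ∈ range m, -(4 * (∏ l ∈ range a, ((x / 2 + 1 / 2 + ((2 * a + 1 : ℕ) : ℂ)) ^ 2 -
          (x / 2 + 1 / 2 + ((2 * l + 1 : ℕ) : ℂ)) ^ 2)) *
        ((∏ l ∈ range a, ((x / 2 + 1 / 2 + ((2 * a : ℕ) : ℂ)) ^ 2 -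
          (x / 2 + 1 / 2 + ((2 * l : ℕ) : ℂ)) ^ 2)) * (x / 2 + 1 / 2 + ((2 * a : ℕ) : ℂ)))) := by
  induction m with
  | zero => simp [prodFact4]
  | succ m ih =>
    rw [Finset.prod_range_succ _ m, ← ih, prod_poch_zero_even_succ, prod_poch_zero_odd_succ]
    have hodd : ∏ l ∈ range m, ((x / 2 + 1 / 2 + ((2 * m + 1 : ℕ) : ℂ)) ^ 2 -
        (x / 2 + 1 / 2 + ((2 * l + 1 : ℕ) : ℂ)) ^ 2) =
        4 ^ m * (m.factorial : ℂ) * ∏ s ∈ range m, (x / 2 + 1 / 2 + 2 * m - s) := by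
      rw [← prod_range_succ_add_reflect, ← prod_range_sq_sub_sq]
      refine Finset.prod_congr rfl fun l _ => ?_
      push_cast
      ring
    have heven : (∏ l ∈ range m, ((x / 2 + 1 / 2 + ((2 * m : ℕ) : ℂ)) ^ 2 -
        (x / 2 + 1 / 2 + ((2 * l : ℕ) : ℂ)) ^ 2)) * (x / 2 + 1 / 2 + ((2 * m : ℕ) : ℂ)) =
        4 ^ m * (m.factorial : ℂ) * ∏ s ∈ range (m + 1), (x / 2 + 1 / 2 + 2 * m - s) := by
      rw [← prod_range_add_reflect, Finset.prod_range_succ, ← mul_assoc]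
      push_cast
      rw [prod_range_sq_sub_sq]
      ring
    rw [hodd, heven]
    have h₀ := prodFact4_mul_factorial (2 * m)
    have h₁ := prodFact4_mul_factorial (2 * m + 1)
    simp only [show 2 * m / 2 = m by omega, show (2 * m + 1) / 2 = m by omega,
      Nat.add_sub_cancel] at h₀ h₁
    rw [show 2 * (m + 1) = 2 * m + 1 + 1 by ring, Finset.prod_range_succ,
      Finset.prod_range_succ _ (2 * m), Nat.add_sub_cancel]
    set Φ := ∏ r ∈ range (2 * m), (r.factorial : ℂ)
    set A := ∏ l ∈ range (m / 2), ∏ t ∈ range ((2 * m : ℤ) - 4 * l - 3).toNat,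
          (x / 2 + (2 * ((l : ℂ) + 1) + 1 / 2) + t)
    set B := ∏ l ∈ range ((m + 1) / 2), ∏ t ∈ range ((2 * m : ℤ) - 4 * l - 1).toNat,
          (x / 2 + (2 * (l : ℂ) + 1 / 2) + t)
    set S := ∏ s ∈ range m, (x / 2 + 1 / 2 + 2 * (m : ℂ) - s)
    set S' := ∏ s ∈ range (m + 1), (x / 2 + 1 / 2 + 2 * (m : ℂ) - s)
    have hfact : prodFact4 (2 * m + 1) * ((2 * m).factorial * (2 * m + 1).factorial : ℂ) =
        prodFact4 (2 * m - 1) * (4 ^ m * (m.factorial : ℂ)) ^ 2 := by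
      linear_combination ((2 * m).factorial : ℂ) * h₁ + (4 ^ m * (m.factorial : ℂ)) * h₀
    have hq' : (1 + q) ^ 2 * (2 * q) = -4 := by linear_combination (2 * q + 4) * hq
    have hpow : (1 + q) ^ (2 * m + 1 + 1) * (2 ^ (m + 1) * q ^ (m + 1)) =
        (1 + q) ^ (2 * m) * (2 ^ m * q ^ m) * -4 := by
      rw [← hq']
      ring
    clear_value Φ A B S S'
    linear_combination Φ * A * B * S * S' *
      ((1 + q) ^ (2 * m + 1 + 1) * (2 ^ (m + 1) * q ^ (m + 1)) * hfact +
        prodFact4 (2 * m - 1) * (4 ^ m * (m.factorial : ℂ)) ^ 2 * hpow)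

/-- the evaluations of d_{n,k}(x,q) for q a primitive fourth root of unity
(q = i or q = -i); in (4) the factor (1-q)^n realizes (2q⁻¹)^{n/2}. -/
theorem statement13 (q : ℂ) (hq : IsPrimitiveRoot q 4) (k : ℤ) (n : ℕ) (hn : 1 ≤ n) :
    (dF ℂ (2 * n + 1) (4 * k) q = 0) ∧
    (dF ℂ (2 * n) (4 * k) q =
      Polynomial.C ((2 : ℂ) ^ n * prodFact4 (2 * n - 1) * q ^ n) *
      (∏ l ∈ Finset.range (n / 2),
        poch (halfX + Polynomial.C (2 * ((l : ℂ) + 1) + 1 / 2)) ((2 * n : ℤ) - 4 * l - 3)) *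
      (∏ l ∈ Finset.range ((n + 1) / 2),
        poch (halfX + Polynomial.C (2 * (l : ℂ) + 1 / 2)) ((2 * n : ℤ) - 4 * l - 1))) ∧
    (dF ℂ n (4 * k + 1) q =
      Polynomial.C ((2 : ℂ) ^ (n / 2) * prodFact4 (n - 1)) *
      ∏ l ∈ Finset.range (n / 2),
        poch (halfX + Polynomial.C ((l : ℂ) + 1)) ((n : ℤ) - 2 * l - 1)) ∧
    (dF ℂ n (4 * k + 2) q =
      Polynomial.C (prodFact4 (n - 1) * (1 - q) ^ n) *
      (∏ l ∈ Finset.range (n / 2),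
        poch (halfX + Polynomial.C ((l : ℂ) + 3 / 2)) ((l : ℤ) + 1)) *
      (∏ l ∈ Finset.range ((n - 1) / 2),
        poch (halfX + Polynomial.C ((l : ℂ) + 3 / 2)) ((l : ℤ) + 1))) ∧
    (dF ℂ n (4 * k + 3) q = Polynomial.C ((-q) ^ n) * dF ℂ n (4 * k + 1) q) := by
  have hq2 : q ^ 2 = -1 := by
    have h₁ : q ^ 2 ≠ 1 := hq.pow_ne_one_of_pos_of_lt (by norm_num) (by norm_num)
    have h₂ : (q ^ 2 - 1) * (q ^ 2 + 1) = 0 := by linear_combination hq.pow_eq_one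
    exact eq_neg_of_add_eq_zero_left
      ((mul_eq_zero.1 h₂).resolve_left (sub_ne_zero.2 h₁))
  have hq0 : -q ≠ 0 := neg_ne_zero.2 (hq.ne_zero (by norm_num))
  have hq1 : 1 + q ≠ 0 := fun h => by
    rw [eq_neg_of_add_eq_zero_right h] at hq2
    norm_num at hq2
  have hscale : ∀ n : ℕ, (1 + q) ^ n * (∏ r ∈ range n, (r.factorial : ℂ)) ≠ 0 := fun n =>
    mul_ne_zero (pow_ne_zero _ hq1)
      (Finset.prod_ne_zero_iff.2 fun r _ => by exact_mod_cast r.factorial_ne_zero)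
  have hz : ∀ s : ℕ, (-q) ^ (4 * k + s) = (-q) ^ s := fun s => by
    rw [zpow_add₀ hq0, zpow_mul, zpow_natCast,
      show (-q) ^ (4 : ℤ) = 1 by
        rw [show (4 : ℤ) = ((4 : ℕ) : ℤ) by rfl, zpow_natCast]
        linear_combination (q ^ 2 - 1) * hq2,
      one_zpow, one_mul]
  have hz₀ : (-q) ^ (4 * k) = 1 := by simpa using hz 0
  have hz₁ : (-q) ^ (4 * k + 1) = -q := by simpa using hz 1
  have hz₂ : (-q) ^ (4 * k + 2) = -1 := by
    rw [← hq2, ← neg_sq q]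
    exact hz 2
  have hz₃ : (-q) ^ (4 * k + 3) = - -q := by
    refine (hz 3).trans ?_
    linear_combination -q * hq2
  have hw2 : (-q) ^ 2 = -1 := by rw [neg_sq, hq2]
  refine ⟨?_, ?_, ?_, ?_, ?_⟩ <;> refine Polynomial.funext fun x => ?_
  · refine mul_left_cancel₀ (hscale (2 * n + 1)) ?_
    rw [eval_dF_eq_det q hq2, hz₀, eval_zero, mul_zero]
    simp only [one_mul]
    exact det_anti_checkerboard_odd n fun j => x / 2 + 1 / 2 + j
  · refine mul_left_cancel₀ (hscale (2 * n)) ?_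
    rw [eval_dF_eq_det q hq2, hz₀]
    simp only [eval_mul, eval_C, eval_prod, eval_poch, one_mul]
    rw [closed_form_zero q x hq2, mul_comm 2 n]
    exact det_anti_checkerboard_even n fun j => x / 2 + 1 / 2 + j
  · refine mul_left_cancel₀ (hscale n) ?_
    rw [eval_dF_eq_det q hq2, hz₁]
    simp only [eval_mul, eval_C, eval_prod, eval_poch]
    rw [closed_form_one q x]
    exact det_twisted_vandermonde (-q) hw2 n fun j => x / 2 + 1 / 2 + j
  · refine mul_left_cancel₀ (hscale n) ?_
    rw [eval_dF_eq_det q hq2, hz₂]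
    simp only [eval_mul, eval_C, eval_prod, eval_poch, neg_mul, one_mul, sub_neg_eq_add]
    rw [closed_form_two q x hq2]
    exact det_checkerboard n fun j => x / 2 + 1 / 2 + (j : ℂ)
  · refine mul_left_cancel₀ (hscale n) ?_
    rw [eval_mul, eval_C, mul_left_comm, eval_dF_eq_det q hq2, eval_dF_eq_det q hq2, hz₁, hz₃]
    exact det_twisted_neg (-q) hw2 n fun j => x / 2 + 1 / 2 + j

end
end

section
/- For every positive integer n, the 2-enumeration of alternating sign matrices of size n satisfies A_n(2) = 2^{n(n−1)/2}. -/
open Finset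

noncomputable section

/-- A matrix is an alternating sign matrix: entries in {-1,0,1}, all row and column sums 1,
and all partial row and column sums (from the start) equal to 0 or 1. -/
def IsASM {n : ℕ} (A : Matrix (Fin n) (Fin n) ℤ) : Prop :=
  (∀ i j, A i j = -1 ∨ A i j = 0 ∨ A i j = 1) ∧
  (∀ i, ∑ j, A i j = 1) ∧
  (∀ j, ∑ i, A i j = 1) ∧
  (∀ i j, (∑ j' ∈ Finset.Iic j, A i j') = 0 ∨ (∑ j' ∈ Finset.Iic j, A i j') = 1) ∧
  (∀ i j, (∑ i' ∈ Finset.Iic i, A i' j) = 0 ∨ (∑ i' ∈ Finset.Iic i, A i' j) = 1)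

open scoped Classical in
/-- The (finite) set of all alternating sign matrices of size n; since every ASM has entries
in {-1,0,1}, it occurs in the image below. -/
noncomputable def asmFinset (n : ℕ) : Finset (Matrix (Fin n) (Fin n) ℤ) :=
  ((Finset.univ : Finset (Matrix (Fin n) (Fin n) (Fin 3))).image
    (fun B => Matrix.of fun i j => ((B i j : ℕ) : ℤ) - 1)).filter (fun A => IsASM A)

/-- μ(A): the number of entries of A equal to -1. -/
def asmMu {n : ℕ} (A : Matrix (Fin n) (Fin n) ℤ) : ℕ :=
  (Finset.univ.filter (fun p : Fin n × Fin n => A p.1 p.2 = -1)).card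

/-- The Q-enumeration A_n(Q) = ∑_A Q^{μ(A)} of alternating sign matrices of size n. -/
noncomputable def asmEnum {S : Type*} [CommRing S] (n : ℕ) (Q : S) : S :=
  ∑ A ∈ asmFinset n, Q ^ asmMu A

/-- Summing the forward difference of `h` over an interval by the (doubled) trapezoidal rule. -/
theorem sum_trapezoid_forwardDiff (h : ℕ → ℚ) {a b : ℕ} (hab : a < b) :
    ∑ x ∈ Icc a b, (if x = a ∨ x = b then (1 : ℚ) else 2) * (h (x + 1) - h x) =
      (h (b + 1) + h b) - (h (a + 1) + h a) := by
  have hsplit : Icc a b = insert a (insert b (Ico (a + 1) b)) := by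
    ext x
    simp only [mem_Icc, mem_insert, mem_Ico]
    omega
  have hinner : ∑ x ∈ Ico (a + 1) b, (if x = a ∨ x = b then (1 : ℚ) else 2) * (h (x + 1) - h x) =
      2 * (h b - h (a + 1)) := by
    rw [← Finset.sum_Ico_sub h hab, Finset.mul_sum]
    refine Finset.sum_congr rfl fun x hx => ?_
    rw [mem_Ico] at hx
    rw [if_neg (by omega)]
  rw [hsplit, Finset.sum_insert (by simp; omega), Finset.sum_insert (by simp), hinner]
  simp
  ring

open Polynomial in
/-- The monic polynomial of degree `j` proportional to the forward difference of `X ^ (j + 1)`. -/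
def diffPoly (j : ℕ) : ℚ[X] := C ((j + 1 : ℚ)⁻¹) * ((X + 1) ^ (j + 1) - X ^ (j + 1))

open Polynomial in
/-- The monic polynomial of degree `j` averaging `X ^ j` and `(X + 1) ^ j`. -/
def meanPoly (j : ℕ) : ℚ[X] := C (2⁻¹ : ℚ) * ((X + 1) ^ j + X ^ j)

theorem Polynomial.natDegree_eq_and_monic_of_coeff {p : Polynomial ℚ} {j : ℕ}
    (hzero : ∀ k, j < k → p.coeff k = 0) (hone : p.coeff j = 1) :
    p.natDegree = j ∧ p.Monic := by
  have hle : p.natDegree ≤ j := Polynomial.natDegree_le_iff_coeff_eq_zero.2 hzero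
  exact ⟨Polynomial.natDegree_eq_of_le_of_coeff_ne_zero hle (by simp [hone]),
    Polynomial.monic_of_natDegree_le_of_coeff_eq_one j hle hone⟩

theorem diffPoly_natDegree_and_monic (j : ℕ) :
    (diffPoly j).natDegree = j ∧ (diffPoly j).Monic := by
  apply Polynomial.natDegree_eq_and_monic_of_coeff
  · intro k hk
    rw [diffPoly, Polynomial.coeff_C_mul, Polynomial.coeff_sub, Polynomial.coeff_X_add_one_pow,
      Polynomial.coeff_X_pow]
    rcases eq_or_ne k (j + 1) with rfl | hne
    · simp
    · rw [Nat.choose_eq_zero_of_lt (by omega), if_neg hne]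
      simp
  · rw [diffPoly, Polynomial.coeff_C_mul, Polynomial.coeff_sub, Polynomial.coeff_X_add_one_pow,
      Polynomial.coeff_X_pow, if_neg (by omega), Nat.choose_succ_self_right]
    have : (j + 1 : ℚ) ≠ 0 := by positivity
    push_cast
    field_simp
    ring

theorem meanPoly_natDegree_and_monic (j : ℕ) :
    (meanPoly j).natDegree = j ∧ (meanPoly j).Monic := by
  apply Polynomial.natDegree_eq_and_monic_of_coeff
  · intro k hk
    rw [meanPoly, Polynomial.coeff_C_mul, Polynomial.coeff_add, Polynomial.coeff_X_add_one_pow,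
      Polynomial.coeff_X_pow, Nat.choose_eq_zero_of_lt hk, if_neg (by omega)]
    simp
  · rw [meanPoly, Polynomial.coeff_C_mul, Polynomial.coeff_add, Polynomial.coeff_X_add_one_pow,
      Polynomial.coeff_X_pow]
    norm_num

theorem sum_trapezoid_diffPoly {m : ℕ} (j : ℕ) {a b : Fin m} (hab : a < b) :
    ∑ x ∈ Icc a b, (if x = a ∨ x = b then (1 : ℚ) else 2) * (diffPoly j).eval (x : ℚ) =
      2 / (j + 1) * ((meanPoly (j + 1)).eval (b : ℚ) - (meanPoly (j + 1)).eval (a : ℚ)) := by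
  have h := sum_trapezoid_forwardDiff (fun x => (j + 1 : ℚ)⁻¹ * (x : ℚ) ^ (j + 1))
    (Fin.lt_def.1 hab)
  rw [← Fin.map_valEmbedding_Icc, Finset.sum_map] at h
  calc _ = _ := Finset.sum_congr rfl fun x _ => ?_
    _ = _ := h
    _ = _ := ?_
  · simp only [Fin.valEmbedding_apply, Fin.ext_iff, diffPoly, Polynomial.eval_mul,
      Polynomial.eval_C, Polynomial.eval_sub, Polynomial.eval_pow, Polynomial.eval_add,
      Polynomial.eval_X, Polynomial.eval_one]
    push_cast
    ring
  · simp only [meanPoly, Polynomial.eval_mul, Polynomial.eval_C, Polynomial.eval_pow,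
      Polynomial.eval_add, Polynomial.eval_X, Polynomial.eval_one]
    push_cast
    ring

/-- A determinant whose first column is constantly one equals the determinant of consecutive row
differences. -/
theorem Matrix.det_of_column_zero_eq_one {r : ℕ} (M : Matrix (Fin (r + 1)) (Fin (r + 1)) ℚ)
    (hM : ∀ i, M i 0 = 1) :
    M.det = (Matrix.of fun i j : Fin r => M i.succ j.succ - M i.castSucc j.succ).det := by
  let N : Matrix (Fin (r + 1)) (Fin (r + 1)) ℚ :=
    Matrix.of (Fin.cons (M 0) fun i => M i.succ - M i.castSucc)
  have hdet : M.det = N.det :=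
    Matrix.det_eq_of_forall_row_eq_smul_add_pred (fun _ => 1) (fun j => by simp [N])
      (fun i j => by simp [N])
  rw [hdet, Matrix.det_succ_column_zero, Fin.sum_univ_succ, Finset.sum_eq_zero]
  · simp only [Fin.val_zero, pow_zero, one_mul, add_zero]
    rw [show N 0 0 = 1 from hM 0, one_mul]
    rfl
  · intro i _
    simp [N, hM]

/-- The Vandermonde determinant at column positions `k`. -/
def vdm {r m : ℕ} (k : Fin r → Fin m) : ℚ := (Matrix.vandermonde fun i => (k i : ℚ)).det

theorem sum_interlacing_vdm {r m : ℕ} {k : Fin (r + 1) → Fin m} (hk : StrictMono k) :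
    ∑ l ∈ Fintype.piFinset fun i : Fin r => Icc (k i.castSucc) (k i.succ),
      (∏ i, if l i = k i.castSucc ∨ l i = k i.succ then (1 : ℚ) else 2) * vdm l =
      2 ^ r / (r.factorial : ℚ) * vdm k := by
  have hl (l : Fin r → Fin m) : vdm l =
      (Matrix.of fun i j : Fin r => (diffPoly j).eval (l i : ℚ)).det :=
    Matrix.det_eval_matrixOfPolynomials_eq_det_vandermonde _ (fun j => diffPoly j)
      (fun j => (diffPoly_natDegree_and_monic j).1) fun j => (diffPoly_natDegree_and_monic j).2
  have hvk : vdm k = (Matrix.of fun i j : Fin (r + 1) => (meanPoly j).eval (k i : ℚ)).det :=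
    Matrix.det_eval_matrixOfPolynomials_eq_det_vandermonde _ (fun j => meanPoly j)
      (fun j => (meanPoly_natDegree_and_monic j).1) fun j => (meanPoly_natDegree_and_monic j).2
  have hprod : (2 : ℚ) ^ r / (r.factorial : ℚ) = ∏ j : Fin r, (2 / ((j : ℕ) + 1 : ℚ)) := by
    rw [Finset.prod_div_distrib, Fin.prod_univ_eq_prod_range (fun j => ((j : ℕ) + 1 : ℚ)) r]
    simp [← Finset.prod_range_add_one_eq_factorial]
  rw [hvk, Matrix.det_of_column_zero_eq_one _ (fun i => by norm_num [meanPoly]), hprod,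
    ← Matrix.det_mul_row]
  have hsum := (Matrix.detRowAlternating (n := Fin r) (R := ℚ)).toMultilinearMap.map_sum_finset
    (fun i x => fun j : Fin r =>
      (if x = k i.castSucc ∨ x = k i.succ then (1 : ℚ) else 2) * (diffPoly j).eval (x : ℚ))
    (fun i : Fin r => Icc (k i.castSucc) (k i.succ))
  calc _ = _ := Finset.sum_congr rfl fun l _ => ?_
    _ = _ := hsum.symm
    _ = _ := ?_
  · rw [hl, ← Matrix.det_mul_column]
    rfl
  · change Matrix.det _ = _
    congr 1
    ext i j
    rw [Finset.sum_apply, sum_trapezoid_diffPoly j (hk i.castSucc_lt_succ)]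
    simp

theorem StrictMono.apply_le_iff_lt_card {r m : ℕ} {k : Fin r → Fin m} (hk : StrictMono k)
    (i : Fin r) (j : Fin m) : k i ≤ j ↔ (i : ℕ) < #{x ∈ univ.image k | x ≤ j} := by
  have hcard : #{x ∈ univ.image k | x ≤ j} = #{a | k a ≤ j} := by
    rw [Finset.filter_image, Finset.card_image_of_injective _ hk.injective]
  rw [hcard]
  constructor
  · intro h
    have hsub : Iic i ⊆ ({a | k a ≤ j} : Finset (Fin r)) := fun a ha => by
      simpa using (hk.monotone (mem_Iic.1 ha)).trans h
    have := Finset.card_le_card hsub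
    rw [Fin.card_Iic] at this
    omega
  · intro h
    by_contra hlt
    have hsub : ({a | k a ≤ j} : Finset (Fin r)) ⊆ Iio i := fun a ha => by
      rw [mem_filter] at ha
      rw [mem_Iio]
      by_contra hia
      exact hlt ((hk.monotone (not_lt.1 hia)).trans ha.2)
    have := Finset.card_le_card hsub
    rw [Fin.card_Iio] at this
    omega

/-- `T` interlaces `S`: consecutive elements of `S` weakly separate the elements of `T`. -/
def Interlaces {m : ℕ} (T S : Finset (Fin m)) : Prop :=
  #S = #T + 1 ∧
    ∀ j, #{x ∈ T | x ≤ j} ≤ #{x ∈ S | x ≤ j} ∧ #{x ∈ S | x ≤ j} ≤ #{x ∈ T | x ≤ j} + 1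

theorem interlaces_image_iff {r m : ℕ} {k : Fin (r + 1) → Fin m} {l : Fin r → Fin m}
    (hk : StrictMono k) (hl : StrictMono l) :
    Interlaces (univ.image l) (univ.image k) ↔ ∀ i, k i.castSucc ≤ l i ∧ l i ≤ k i.succ := by
  have hkc : #(univ.image k) = r + 1 := by
    rw [Finset.card_image_of_injective _ hk.injective, Finset.card_fin]
  have hlc : #(univ.image l) = r := by
    rw [Finset.card_image_of_injective _ hl.injective, Finset.card_fin]
  constructor
  · rintro ⟨-, h⟩ i
    constructor
    · rw [hk.apply_le_iff_lt_card]
      exact ((hl.apply_le_iff_lt_card i _).1 le_rfl).trans_le (h (l i)).1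
    · rw [hl.apply_le_iff_lt_card]
      have := ((hk.apply_le_iff_lt_card i.succ _).1 le_rfl).trans_le (h (k i.succ)).2
      rw [Fin.val_succ] at this
      omega
  · refine fun h => ⟨by rw [hkc, hlc], fun j => ⟨?_, ?_⟩⟩
    · by_contra! hlt
      have hle := hlc ▸ Finset.card_filter_le (univ.image l) (· ≤ j)
      let i : Fin r := ⟨#{x ∈ univ.image k | x ≤ j}, by omega⟩
      have := (hk.apply_le_iff_lt_card i.castSucc j).1
        ((h i).1.trans ((hl.apply_le_iff_lt_card i j).2 hlt))
      simp [i] at this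
    · by_contra! hlt
      have hle := hkc ▸ Finset.card_filter_le (univ.image k) (· ≤ j)
      let i : Fin r := ⟨#{x ∈ univ.image l | x ≤ j}, by omega⟩
      have := (hl.apply_le_iff_lt_card i j).1
        ((h i).2.trans ((hk.apply_le_iff_lt_card i.succ j).2 hlt))
      simp [i] at this

theorem two_pow_card_sdiff_image {r m : ℕ} {k : Fin (r + 1) → Fin m} {l : Fin r → Fin m}
    (hk : StrictMono k) (hl : StrictMono l) (h : ∀ i, k i.castSucc ≤ l i ∧ l i ≤ k i.succ) :
    (2 : ℚ) ^ #(univ.image l \ univ.image k) =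
      ∏ i, if l i = k i.castSucc ∨ l i = k i.succ then (1 : ℚ) else 2 := by
  have hiff (i : Fin r) : (l i = k i.castSucc ∨ l i = k i.succ) ↔ l i ∈ univ.image k := by
    simp only [mem_image, mem_univ, true_and]
    constructor
    · rintro (h | h) <;> exact ⟨_, h.symm⟩
    · rintro ⟨a, ha⟩
      have h₁ := hk.le_iff_le.1 ((h i).1.trans_eq ha.symm)
      have h₂ := hk.le_iff_le.1 (ha.trans_le (h i).2)
      rw [Fin.le_def, Fin.val_castSucc] at h₁
      rw [Fin.le_def, Fin.val_succ] at h₂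
      rcases Nat.eq_or_lt_of_le h₁ with h | h
      · exact Or.inl (ha ▸ congrArg k (Fin.ext h.symm))
      · exact Or.inr (ha ▸ congrArg k (Fin.ext (by rw [Fin.val_succ]; omega)))
  simp only [hiff]
  rw [Finset.sdiff_eq_filter, Finset.filter_image, Finset.card_image_of_injective _ hl.injective,
    ← Finset.prod_const, Finset.prod_filter]
  exact Finset.prod_congr rfl fun i _ => by rw [ite_not]

open scoped Classical in
/-- The `2`-weighted sum over all sets interlacing a given one, with Vandermonde weights. -/
theorem sum_interlaces {r m : ℕ} {k : Fin (r + 1) → Fin m} (hk : StrictMono k)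
    {g : Finset (Fin m) → ℚ} {c : ℚ}
    (hg : ∀ l : Fin r → Fin m, StrictMono l → g (univ.image l) = c * vdm l) :
    ∑ T with Interlaces T (univ.image k), 2 ^ #(T \ univ.image k) * g T =
      2 ^ r / (r.factorial : ℚ) * c * vdm k := by
  have hmono {l : Fin r → Fin m} (h : ∀ i, k i.castSucc ≤ l i ∧ l i ≤ k i.succ) : Monotone l := by
    intro a b hab
    rcases hab.eq_or_lt with rfl | hlt
    · exact le_rfl
    · exact (h a).2.trans ((hk.monotone (Fin.succ_le_castSucc_iff.2 hlt)).trans (h b).1)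
  calc _ = ∑ l ∈ Fintype.piFinset fun i : Fin r => Icc (k i.castSucc) (k i.succ) with StrictMono l,
        c * ((∏ i, if l i = k i.castSucc ∨ l i = k i.succ then (1 : ℚ) else 2) * vdm l) := ?_
    _ = ∑ l ∈ Fintype.piFinset fun i : Fin r => Icc (k i.castSucc) (k i.succ),
        c * ((∏ i, if l i = k i.castSucc ∨ l i = k i.succ then (1 : ℚ) else 2) * vdm l) := ?_
    _ = _ := ?_
  · symm
    refine Finset.sum_bij (fun l _ => univ.image l) ?_ ?_ ?_ ?_
    · intro l hl
      simp only [mem_filter, Fintype.mem_piFinset, mem_Icc] at hl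
      simpa using (interlaces_image_iff hk hl.2).2 hl.1
    · intro l hl l' hl' heq
      refine ((mem_filter.1 hl).2.range_inj (mem_filter.1 hl').2).1 ?_
      simpa using congrArg (fun s : Finset (Fin m) => (s : Set (Fin m))) heq
    · intro T hT
      have hT := (mem_filter.1 hT).2
      have hcard : #T = r := by
        have := hT.1
        rw [Finset.card_image_of_injective _ hk.injective, Finset.card_fin] at this
        omega
      have himg : univ.image (T.orderEmbOfFin hcard) = T := by
        simp
      refine ⟨T.orderEmbOfFin hcard, ?_, himg⟩
      rw [← himg] at hT
      simp only [mem_filter, Fintype.mem_piFinset, mem_Icc]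
      exact ⟨(interlaces_image_iff hk (T.orderEmbOfFin hcard).strictMono).1 hT,
        (T.orderEmbOfFin hcard).strictMono⟩
    · intro l hl
      simp only [mem_filter, Fintype.mem_piFinset, mem_Icc] at hl
      rw [hg l hl.2, two_pow_card_sdiff_image hk hl.2 hl.1]
      ring
  · refine Finset.sum_filter_of_ne fun l hl hne => ?_
    simp only [Fintype.mem_piFinset, mem_Icc] at hl
    refine (hmono hl).strictMono_of_injective ?_
    have hdet : vdm l ≠ 0 := fun h => hne (by rw [h]; ring)
    have hinj := Matrix.det_vandermonde_ne_zero_iff.1 hdet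
    exact fun a b hab => hinj (by simp only [hab])
  · rw [← Finset.mul_sum, sum_interlacing_vdm hk]
    ring

/-- The top `r` rows of an alternating sign matrix with `m` columns, where `S` is the set of
columns whose entries sum to one so far. -/
def IsPartialASM {r m : ℕ} (S : Finset (Fin m)) (M : Fin r → Fin m → ℤ) : Prop :=
  (∀ i, ∑ j, M i j = 1) ∧
  (∀ i j, (∑ j' ∈ Iic j, M i j') = 0 ∨ (∑ j' ∈ Iic j, M i j') = 1) ∧
  (∀ i j, (∑ i' ∈ Iic i, M i' j) = 0 ∨ (∑ i' ∈ Iic i, M i' j) = 1) ∧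
  ∀ j, ∑ i, M i j = if j ∈ S then 1 else 0

open scoped Classical in
/-- The set of partial alternating sign matrices with `r` rows and column sum set `S`. -/
def partialASMFinset {m : ℕ} (r : ℕ) (S : Finset (Fin m)) : Finset (Fin r → Fin m → ℤ) :=
  {M ∈ Fintype.piFinset fun _ => Fintype.piFinset fun _ => {-1, 0, 1} | IsPartialASM S M}

theorem mem_partialASMFinset {r m : ℕ} {S : Finset (Fin m)} {M : Fin r → Fin m → ℤ} :
    M ∈ partialASMFinset r S ↔
      (∀ i j, M i j = -1 ∨ M i j = 0 ∨ M i j = 1) ∧ IsPartialASM S M := by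
  simp [partialASMFinset]

/-- The number of entries equal to `-1`. -/
def negCount {r m : ℕ} (M : Fin r → Fin m → ℤ) : ℕ := ∑ i, #{j | M i j = -1}

/-- The row leading from column sum set `T` to column sum set `S`. -/
def rowBetween {m : ℕ} (T S : Finset (Fin m)) (j : Fin m) : ℤ :=
  (if j ∈ S then 1 else 0) - (if j ∈ T then 1 else 0)

theorem rowBetween_eq {m : ℕ} (T S : Finset (Fin m)) (j : Fin m) :
    rowBetween T S j = -1 ∨ rowBetween T S j = 0 ∨ rowBetween T S j = 1 := by
  unfold rowBetween
  split_ifs <;> simp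

theorem card_rowBetween_eq_neg_one {m : ℕ} (T S : Finset (Fin m)) :
    #{j | rowBetween T S j = -1} = #(T \ S) := by
  congr 1
  ext j
  simp only [mem_filter_univ, mem_sdiff]
  by_cases hS : j ∈ S <;> by_cases hT : j ∈ T <;> simp [rowBetween, hS, hT]

theorem interlaces_iff_rowBetween {m : ℕ} {T S : Finset (Fin m)} :
    Interlaces T S ↔ (∑ j, rowBetween T S j = 1) ∧
      ∀ j, (∑ j' ∈ Iic j, rowBetween T S j') = 0 ∨ (∑ j' ∈ Iic j, rowBetween T S j') = 1 := by
  have htotal : ∑ j, rowBetween T S j = (#S : ℤ) - #T := by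
    simp [rowBetween]
  have hpartial (j : Fin m) : ∑ j' ∈ Iic j, rowBetween T S j' =
      (#{x ∈ S | x ≤ j} : ℤ) - #{x ∈ T | x ≤ j} := by
    have hfilter (U : Finset (Fin m)) : {x ∈ Iic j | x ∈ U} = {x ∈ U | x ≤ j} := by
      ext x
      simp [and_comm]
    simp only [rowBetween, Finset.sum_sub_distrib, Finset.sum_boole, hfilter]
  simp only [htotal, hpartial, Interlaces]
  refine and_congr (by omega) (forall_congr' fun j => by omega)

theorem Fin.sum_Iic_last {r : ℕ} (f : Fin (r + 1) → ℤ) :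
    ∑ a ∈ Iic (Fin.last r), f a = ∑ a, f a := by
  rw [← Fin.top_eq_last, Finset.Iic_top]

theorem isPartialASM_snoc_iff {r m : ℕ} {T S : Finset (Fin m)} {M : Fin r → Fin m → ℤ}
    (hM : ∀ j, ∑ i, M i j = if j ∈ T then 1 else 0) :
    IsPartialASM S (Fin.snoc (α := fun _ => Fin m → ℤ) M (rowBetween T S)) ↔
      IsPartialASM T M ∧ Interlaces T S := by
  have hsum (j : Fin m) : ∑ i, (Fin.snoc (α := fun _ => Fin m → ℤ) M (rowBetween T S)) i j =
      if j ∈ S then 1 else 0 := by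
    simp [Fin.sum_univ_castSucc, hM, rowBetween]
  rw [interlaces_iff_rowBetween]
  simp only [IsPartialASM, Fin.forall_fin_succ', Fin.sum_Iic_castSucc, Fin.sum_Iic_last, hsum,
    Fin.snoc_castSucc, Fin.snoc_last, hM]
  have (j : Fin m) : (if j ∈ S then (1 : ℤ) else 0) = 0 ∨ (if j ∈ S then (1 : ℤ) else 0) = 1 := by
    split_ifs <;> simp
  tauto

theorem IsPartialASM.column_sum_init {r m : ℕ} {S : Finset (Fin m)} {M : Fin (r + 1) → Fin m → ℤ}
    (hM : IsPartialASM S M) (j : Fin m) :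
    ∑ i : Fin r, M i.castSucc j =
      if j ∈ ({j | ∑ i : Fin r, M i.castSucc j = 1} : Finset (Fin m)) then 1 else 0 := by
  have h : ∑ i : Fin r, M i.castSucc j = 0 ∨ ∑ i : Fin r, M i.castSucc j = 1 := by
    cases r with
    | zero => simp
    | succ r =>
      have := hM.2.2.1 (Fin.last r).castSucc j
      rwa [Fin.sum_Iic_castSucc (fun i => M i j), Fin.sum_Iic_last] at this
  rcases h with h | h <;> simp [h]

theorem negCount_snoc {r m : ℕ} (M : Fin r → Fin m → ℤ) (T S : Finset (Fin m)) :
    negCount (Fin.snoc (α := fun _ => Fin m → ℤ) M (rowBetween T S)) =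
      negCount M + #(T \ S) := by
  simp [negCount, Fin.sum_univ_castSucc, card_rowBetween_eq_neg_one]

theorem rowBetween_column_sums {r m : ℕ} {S : Finset (Fin m)} {M : Fin (r + 1) → Fin m → ℤ}
    (hM : IsPartialASM S M) :
    rowBetween {j | ∑ i : Fin r, M i.castSucc j = 1} S = M (Fin.last r) := by
  ext j
  rw [rowBetween, ← hM.column_sum_init j, ← hM.2.2.2 j, Fin.sum_univ_castSucc]
  ring

open scoped Classical in
/-- Removing the last row of a partial alternating sign matrix. -/
theorem sum_partialASM_succ {r m : ℕ} (S : Finset (Fin m)) :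
    ∑ M ∈ partialASMFinset (r + 1) S, (2 : ℚ) ^ negCount M =
      ∑ T with Interlaces T S,
        2 ^ #(T \ S) * ∑ M ∈ partialASMFinset r T, (2 : ℚ) ^ negCount M := by
  simp only [Finset.mul_sum]
  rw [Finset.sum_sigma']
  symm
  refine Finset.sum_bij'
    (fun p _ => Fin.snoc (α := fun _ => Fin m → ℤ) p.2 (rowBetween p.1 S))
    (fun M _ => ⟨({j | ∑ i : Fin r, M i.castSucc j = 1} : Finset (Fin m)), fun i => M i.castSucc⟩) ?_ ?_ ?_ ?_ ?_
  · rintro ⟨T, M⟩ h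
    simp only [mem_sigma, mem_filter, mem_univ, true_and, mem_partialASMFinset] at h ⊢
    refine ⟨?_, (isPartialASM_snoc_iff h.2.2.2.2.2).2 ⟨h.2.2, h.1⟩⟩
    simpa [Fin.forall_fin_succ', rowBetween_eq] using h.2.1
  · intro M h
    rw [mem_partialASMFinset] at h
    simp only [mem_sigma, mem_filter, mem_univ, true_and, mem_partialASMFinset]
    have hiff := isPartialASM_snoc_iff (S := S) (M := fun i : Fin r => M i.castSucc)
      h.2.column_sum_init
    rw [rowBetween_column_sums h.2] at hiff
    have hsnoc := hiff.1 (by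
      rw [show (fun i : Fin r => M i.castSucc) = Fin.init M from rfl, Fin.snoc_init_self]
      exact h.2)
    exact ⟨hsnoc.2, fun i j => h.1 _ j, hsnoc.1⟩
  · rintro ⟨T, M⟩ h
    simp only [mem_sigma, mem_filter, mem_univ, true_and, mem_partialASMFinset] at h
    have hT : ({j | ∑ i, M i j = 1} : Finset (Fin m)) = T := by
      ext j
      simp [h.2.2.2.2.2 j]
    simp [hT]
  · intro M h
    rw [mem_partialASMFinset] at h
    simp only [rowBetween_column_sums h.2]
    exact Fin.snoc_init_self M
  · rintro ⟨T, M⟩ -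
    simp only
    rw [negCount_snoc, pow_add, mul_comm]

theorem sum_partialASM_eq {m : ℕ} (r : ℕ) (k : Fin r → Fin m) (hk : StrictMono k) :
    ∑ M ∈ partialASMFinset r (univ.image k), (2 : ℚ) ^ negCount M =
      (∏ s ∈ range r, 2 ^ s / (s.factorial : ℚ)) * vdm k := by
  induction r with
  | zero =>
    have hset : partialASMFinset 0 (univ.image k) = univ := by
      refine Finset.eq_univ_of_forall fun M => mem_partialASMFinset.2 ?_
      simp [IsPartialASM]
    rw [hset]
    simp [negCount, vdm]
  | succ r ih =>
    rw [sum_partialASM_succ, sum_interlaces hk ih, Finset.prod_range_succ]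
    ring

theorem asmEnum_two_eq_sum_partialASM (n : ℕ) :
    asmEnum n (2 : ℚ) =
      ∑ M ∈ partialASMFinset n (univ.image (id : Fin n → Fin n)), (2 : ℚ) ^ negCount M := by
  have hset : asmFinset n = partialASMFinset n (univ.image (id : Fin n → Fin n)) := by
    refine Finset.ext fun A => Iff.trans ?_ mem_partialASMFinset.symm
    simp only [asmFinset, mem_filter, mem_image, mem_univ, true_and]
    simp only [IsPartialASM, IsASM, image_id, mem_univ, if_true]
    constructor
    · tauto
    · rintro ⟨hentry, hrow, hprow, hpcol, hcol⟩
      refine ⟨⟨fun i j => ⟨(A i j + 1).toNat, ?_⟩, ?_⟩, hentry, hrow, hcol, hprow, hpcol⟩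
      · rcases hentry i j with h | h | h <;> simp [h]
      · ext i j
        rcases hentry i j with h | h | h <;> simp [h]
  have hmu (A : Matrix (Fin n) (Fin n) ℤ) : asmMu A = negCount A := by
    simp only [asmMu, negCount, Finset.card_filter]
    rw [Fintype.sum_prod_type]
  rw [asmEnum, hset]
  exact Finset.sum_congr rfl fun A _ => by rw [hmu]

/-- the 2-enumeration of ASMs of size n is A_n(2) = 2^{n(n-1)/2}. -/
theorem statement14 (n : ℕ) (hn : 1 ≤ n) :
    asmEnum n (2 : ℚ) = 2 ^ (n * (n - 1) / 2) := by
  obtain ⟨n, rfl⟩ : ∃ k, n = k + 1 := ⟨n - 1, by omega⟩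
  rw [asmEnum_two_eq_sum_partialASM, sum_partialASM_eq _ _ strictMono_id,
    Finset.prod_div_distrib, Finset.prod_pow_eq_pow_sum, Finset.sum_range_id]
  have hvdm : vdm (id : Fin (n + 1) → Fin (n + 1)) = n.superFactorial :=
    Matrix.det_vandermonde_id_eq_superFactorial n
  have hpos : (n.superFactorial : ℚ) ≠ 0 := by
    rw [← Nat.prod_range_succ_factorial, Nat.cast_ne_zero]
    exact Finset.prod_ne_zero_iff.2 fun s _ => s.factorial_ne_zero
  rw [hvdm, ← Nat.cast_prod, Nat.prod_range_succ_factorial, div_mul_cancel₀ _ hpos]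

end
end

section
/- There exists a sequence of polynomials p_m(x) ∈ ℚ[x] (m ≥ 0) with p_0(x) = 1, p_1(x) = 1, p_3(x) = 2x+5, p_{2m}(x) = p_{2m−1}(x+2) for all m ≥ 1, and satisfying for all m ≥ 2 the recursion 2m·p_{2m−3}(x+4)·p_{2m+1}(x) = (x+2m+1)(x+2m+2)·p_{2m−1}(x)·p_{2m−1}(x+4) − (x+1)(x+2)·p_{2m−1}(x+2)², such that for every integer k and all positive integers n the following identities hold in ℚ[x]: d_{n,2k+1}(x,1) = [∏_{i=2}^{⌊n/2⌋}(2i−1)^{−(n+1−2i)}]·∏_{i=1}^{⌊n/2⌋}(x+2i)·p_n(x)·p_{n−1}(x); d_{2n,2k}(x,1) = (−1)^n·[∏_{i=2}^{n}(2i−1)^{−(2n+1−2i)}]·∏_{i=1}^{n}(x+2i−1)·p_{2n}(x−1)²; and d_{2n+1,2k}(x,1) = 0. -/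
open Polynomial Finset

noncomputable section

/-! ### Determinants of matrices given by functions on `ℕ × ℕ` -/

/-- The `n × n` leading principal minor of the infinite matrix `f`. -/
def leadingMinor {R : Type*} [CommRing R] (f : ℕ → ℕ → R) (n : ℕ) : R :=
  Matrix.det (Matrix.of fun i j : Fin n => f i j)

section Determinants

variable {R : Type*} [CommRing R]

lemma leadingMinor_congr {f g : ℕ → ℕ → R} {n : ℕ} (h : ∀ i j, f i j = g i j) :
    leadingMinor f n = leadingMinor g n := by
  simp only [leadingMinor, h]

lemma map_leadingMinor {S : Type*} [CommRing S] (φ : R →+* S) (f : ℕ → ℕ → R) (n : ℕ) :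
    φ (leadingMinor f n) = leadingMinor (fun i j => φ (f i j)) n := by
  simp only [leadingMinor, RingHom.map_det]
  rfl

lemma leadingMinor_mul_mul (u v : ℕ → R) (f : ℕ → ℕ → R) (n : ℕ) :
    leadingMinor (fun i j => u i * (v j * f i j)) n =
      (∏ i ∈ range n, u i) * ((∏ j ∈ range n, v j) * leadingMinor f n) := by
  unfold leadingMinor
  rw [← Fin.prod_univ_eq_prod_range, ← Fin.prod_univ_eq_prod_range, ← Matrix.det_mul_row,
    ← Matrix.det_mul_column]
  rfl

lemma det_mul_det_adjugate_toBlocks₁₁ {m n : Type*} [Fintype m] [DecidableEq m] [Fintype n]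
    [DecidableEq n] (M : Matrix (m ⊕ n) (m ⊕ n) R) :
    M.det * M.adjugate.toBlocks₁₁.det = M.det ^ Fintype.card m * M.toBlocks₂₂.det := by
  have key : M * Matrix.fromBlocks M.adjugate.toBlocks₁₁ 0 M.adjugate.toBlocks₂₁ 1 =
      Matrix.fromBlocks (M.det • 1) M.toBlocks₁₂ 0 M.toBlocks₂₂ := by
    have h := M.mul_adjugate
    rw [← Matrix.fromBlocks_toBlocks M.adjugate] at h
    nth_rewrite 1 [← Matrix.fromBlocks_toBlocks M] at h
    rw [Matrix.fromBlocks_multiply, ← Matrix.fromBlocks_one, Matrix.fromBlocks_smul,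
      Matrix.fromBlocks_inj] at h
    nth_rewrite 1 [← Matrix.fromBlocks_toBlocks M]
    rw [Matrix.fromBlocks_multiply, h.1, h.2.2.1]
    simp
  have h := congrArg Matrix.det key
  rw [Matrix.det_mul, Matrix.det_fromBlocks_zero₁₂, Matrix.det_fromBlocks_zero₂₁] at h
  simpa using h

/-- A case of Jacobi's identity for the complementary minors of the adjugate. -/
lemma det_adjugate_toBlocks₁₁_fin_two {n : Type*} [Fintype n] [DecidableEq n]
    (M : Matrix (Fin 2 ⊕ n) (Fin 2 ⊕ n) R) :
    M.adjugate.toBlocks₁₁.det = M.det * M.toBlocks₂₂.det := by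
  let A' := Matrix.mvPolynomialX (Fin 2 ⊕ n) (Fin 2 ⊕ n) ℤ
  have generic : A'.adjugate.toBlocks₁₁.det = A'.det * A'.toBlocks₂₂.det := by
    apply mul_left_cancel₀ (show A'.det ≠ 0 from Matrix.det_mvPolynomialX_ne_zero _ ℤ)
    rw [det_mul_det_adjugate_toBlocks₁₁, Fintype.card_fin, pow_two, mul_assoc]
  let φ : MvPolynomial ((Fin 2 ⊕ n) × (Fin 2 ⊕ n)) ℤ →+* R :=
    (MvPolynomial.aeval fun p : (Fin 2 ⊕ n) × (Fin 2 ⊕ n) => M p.1 p.2).toRingHom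
  have hφ : φ.mapMatrix A' = M := by
    ext i j
    simp [A', φ, Matrix.mvPolynomialX_apply]
  have h := congrArg φ generic
  rw [map_mul, RingHom.map_det, RingHom.map_det, RingHom.map_det] at h
  have h₁ : φ.mapMatrix A'.adjugate.toBlocks₁₁ = M.adjugate.toBlocks₁₁ := by
    rw [← hφ, ← RingHom.map_adjugate]
    rfl
  have h₂ : φ.mapMatrix A'.toBlocks₂₂ = M.toBlocks₂₂ := by
    rw [← hφ]
    rfl
  rwa [h₁, h₂, hφ] at h

/-- The Desnanot–Jacobi identity. -/
lemma leadingMinor_desnanot_jacobi (f : ℕ → ℕ → R) (n : ℕ) :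
    leadingMinor f (n + 2) * leadingMinor (fun i j => f (i + 1) (j + 1)) n =
      leadingMinor f (n + 1) * leadingMinor (fun i j => f (i + 1) (j + 1)) (n + 1) -
      leadingMinor (fun i j => f (i + 1) j) (n + 1) *
        leadingMinor (fun i j => f i (j + 1)) (n + 1) := by
  let g : Fin 2 ⊕ Fin n → Fin (n + 2) :=
    Sum.elim ![0, Fin.last (n + 1)] (fun i => i.succ.castSucc)
  have hg : Function.Bijective g := by
    rw [Fintype.bijective_iff_injective_and_card]
    refine ⟨?_, by simp; omega⟩
    rintro (a | a) (b | b) h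
    · fin_cases a <;> fin_cases b <;> simp_all [g, Fin.ext_iff]
    · fin_cases a <;> simp [g, Fin.ext_iff] at h; omega
    · fin_cases b <;> simp [g, Fin.ext_iff] at h; omega
    · simpa [g, Fin.ext_iff] using h
  let e := Equiv.ofBijective g hg
  let M : Matrix (Fin (n + 2)) (Fin (n + 2)) R := Matrix.of fun i j => f i j
  have h := det_adjugate_toBlocks₁₁_fin_two (M.submatrix e e)
  rw [Matrix.adjugate_submatrix_equiv_self, Matrix.det_submatrix_equiv_self, Matrix.det_fin_two]
    at h
  simp only [Matrix.toBlocks₁₁, Matrix.of_apply, Matrix.submatrix_apply] at h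
  have e0 : e (Sum.inl 0) = 0 := rfl
  have e1 : e (Sum.inl 1) = Fin.last (n + 1) := rfl
  rw [e0, e1, Matrix.adjugate_fin_succ_eq_det_submatrix, Matrix.adjugate_fin_succ_eq_det_submatrix,
    Matrix.adjugate_fin_succ_eq_det_submatrix, Matrix.adjugate_fin_succ_eq_det_submatrix] at h
  have h₁ : M.det = leadingMinor f (n + 2) := rfl
  have h₂ : ((M.submatrix e e).toBlocks₂₂).det =
      leadingMinor (fun i j => f (i + 1) (j + 1)) n := rfl
  have h₃ : (M.submatrix (Fin.succAbove 0) (Fin.succAbove 0)).det =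
      leadingMinor (fun i j => f (i + 1) (j + 1)) (n + 1) := by
    simp [leadingMinor, M, Matrix.submatrix]
  have h₄ : (M.submatrix (Fin.succAbove (Fin.last _)) (Fin.succAbove (Fin.last _))).det =
      leadingMinor f (n + 1) := by
    simp [leadingMinor, M, Matrix.submatrix]
  have h₅ : (M.submatrix (Fin.succAbove 0) (Fin.succAbove (Fin.last _))).det =
      leadingMinor (fun i j => f (i + 1) j) (n + 1) := by
    simp [leadingMinor, M, Matrix.submatrix]
  have h₆ : (M.submatrix (Fin.succAbove (Fin.last _)) (Fin.succAbove 0)).det =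
      leadingMinor (fun i j => f i (j + 1)) (n + 1) := by
    simp [leadingMinor, M, Matrix.submatrix]
  rw [h₁, h₂, h₃, h₄, h₅, h₆] at h
  have hs : ((-1 : R) ^ (n + 1)) * (-1) ^ (n + 1) = 1 := by
    rw [← mul_pow]; simp
  simp only [Fin.val_zero, Fin.val_last, add_zero, zero_add, pow_zero, one_mul, pow_add] at h
  simp only [pow_add] at hs
  linear_combination -h + (leadingMinor f (n + 1) *
    leadingMinor (fun i j => f (i + 1) (j + 1)) (n + 1) -
      leadingMinor (fun i j => f (i + 1) j) (n + 1) *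
        leadingMinor (fun i j => f i (j + 1)) (n + 1)) * hs

/-- Splitting the indices below `n` into the even and the odd ones. -/
def finEvenOdd (n : ℕ) : Fin ((n + 1) / 2) ⊕ Fin (n / 2) ≃ Fin n :=
  Equiv.ofBijective
    (Sum.elim (fun i => ⟨2 * i, by omega⟩) (fun i => ⟨2 * i + 1, by omega⟩)) (by
      rw [Fintype.bijective_iff_injective_and_card]
      refine ⟨?_, by simp; omega⟩
      rintro (a | a) (b | b) h <;> simp [Fin.ext_iff] at h ⊢ <;> omega)

lemma leadingMinor_eq_det_fromBlocks (f : ℕ → ℕ → R) (n : ℕ) :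
    leadingMinor f n = (Matrix.fromBlocks
      (Matrix.of fun i j : Fin ((n + 1) / 2) => f (2 * i) (2 * j))
      (Matrix.of fun (i : Fin ((n + 1) / 2)) (j : Fin (n / 2)) => f (2 * i) (2 * j + 1))
      (Matrix.of fun (i : Fin (n / 2)) (j : Fin ((n + 1) / 2)) => f (2 * i + 1) (2 * j))
      (Matrix.of fun i j : Fin (n / 2) => f (2 * i + 1) (2 * j + 1))).det := by
  rw [leadingMinor, ← Matrix.det_submatrix_equiv_self (finEvenOdd n)]
  congr 1
  ext (i | i) (j | j) <;> rfl

lemma leadingMinor_of_odd_eq_zero {f : ℕ → ℕ → R} (h : ∀ i j, Odd (i + j) → f i j = 0) (n : ℕ) :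
    leadingMinor f n = leadingMinor (fun i j => f (2 * i) (2 * j)) ((n + 1) / 2) *
      leadingMinor (fun i j => f (2 * i + 1) (2 * j + 1)) (n / 2) := by
  have hz : (Matrix.of fun (i : Fin (n / 2)) (j : Fin ((n + 1) / 2)) =>
      f (2 * i + 1) (2 * j)) = 0 := by
    ext i j
    exact h _ _ ⟨i + j, by ring⟩
  rw [leadingMinor_eq_det_fromBlocks, hz, Matrix.det_fromBlocks_zero₂₁]
  rfl

lemma det_fromBlocks_zero_zero {n : Type*} [Fintype n] [DecidableEq n] (B C : Matrix n n R) :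
    (Matrix.fromBlocks 0 B C 0).det = (-1) ^ Fintype.card n * (B.det * C.det) := by
  have h : Matrix.fromBlocks 0 B C 0 * Matrix.fromBlocks 1 0 1 1 =
      Matrix.fromBlocks B 0 0 C * Matrix.fromBlocks 1 1 1 (0 : Matrix n n R) := by
    simp [Matrix.fromBlocks_multiply]
  have h' := congrArg Matrix.det h
  rw [Matrix.det_mul, Matrix.det_mul, Matrix.det_fromBlocks_zero₁₂, Matrix.det_fromBlocks_zero₁₂,
    Matrix.det_fromBlocks_one₁₁] at h'
  simp only [Matrix.det_one, mul_one, zero_sub, Matrix.det_neg] at h'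
  rw [h', mul_comm]

lemma leadingMinor_two_mul_of_even_eq_zero {f : ℕ → ℕ → R}
    (h : ∀ i j, Even (i + j) → f i j = 0) (n : ℕ) :
    leadingMinor f (2 * n) = (-1) ^ n * (leadingMinor (fun i j => f (2 * i) (2 * j + 1)) n *
      leadingMinor (fun i j => f (2 * i + 1) (2 * j)) n) := by
  rw [leadingMinor_eq_det_fromBlocks]
  have h₁ : (2 * n + 1) / 2 = n := by omega
  have h₂ : 2 * n / 2 = n := by omega
  rw [h₁, h₂]
  have hz₁ : (Matrix.of fun i j : Fin n => f (2 * i) (2 * j)) = 0 := by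
    ext i j
    exact h _ _ ⟨i + j, by ring⟩
  have hz₂ : (Matrix.of fun i j : Fin n => f (2 * i + 1) (2 * j + 1)) = 0 := by
    ext i j
    exact h _ _ ⟨i + j + 1, by ring⟩
  rw [hz₁, hz₂, det_fromBlocks_zero_zero, Fintype.card_fin]
  rfl

lemma leadingMinor_odd_of_even_eq_zero [IsDomain R] [CharZero R] {f : ℕ → ℕ → R}
    (h : ∀ i j, Even (i + j) → f i j = 0) (n : ℕ) : leadingMinor f (2 * n + 1) = 0 := by
  have hsign : ∀ i j, -1 * f i j = (-1) ^ i * ((-1) ^ j * f i j) := by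
    intro i j
    rcases Nat.even_or_odd (i + j) with hij | hij
    · simp [h i j hij]
    · rw [← mul_assoc, ← pow_add, hij.neg_one_pow]
  have hneg : leadingMinor (fun i j => -1 * (1 * f i j)) (2 * n + 1) =
      leadingMinor f (2 * n + 1) := by
    rw [leadingMinor_congr (g := fun i j => (-1) ^ i * ((-1) ^ j * f i j))
      (fun i j => by rw [one_mul, hsign]), leadingMinor_mul_mul, ← mul_assoc, ← prod_mul_distrib]
    simp [← mul_pow]
  rw [leadingMinor_mul_mul (fun _ => -1) (fun _ => 1)] at hneg
  simp only [prod_const, card_range, one_pow, one_mul, (odd_two_mul_add_one n).neg_one_pow,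
    neg_mul] at hneg
  exact self_eq_neg.mp hneg.symm

end Determinants

/-! ### The determinant of the even binomial coefficients -/

/-- The polynomial binomial coefficient `binom(y + 2j, 2j)`. -/
def evenBinom (y : ℚ[X]) (j : ℕ) : ℚ[X] :=
  binomP ℚ (y + 2 * (j : ℚ[X])) (2 * j)

/-- The determinant of the matrix with entries `binom(y + 2i + 2j, 2j)`, `0 ≤ i, j < n`. -/
def evenBinomDet (y : ℚ[X]) (n : ℕ) : ℚ[X] :=
  leadingMinor (fun i j => evenBinom (y + 2 * (i : ℚ[X])) j) n

lemma evenBinom_succ (y : ℚ[X]) (j : ℕ) :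
    evenBinom y (j + 1) = (y + 1) * (y + 2) *
      (C ((2 * (j : ℚ) + 1) * (2 * j + 2))⁻¹ * evenBinom (y + 2) j) := by
  unfold evenBinom binomP
  rw [show 2 * (j + 1) = 2 * j + 1 + 1 by ring, prod_range_succ, prod_range_succ,
    Nat.factorial_succ, Nat.factorial_succ]
  have hp : ∏ t ∈ range (2 * j), (y + 2 * ((j + 1 : ℕ) : ℚ[X]) - (t : ℚ[X])) =
      ∏ t ∈ range (2 * j), (y + 2 + 2 * (j : ℚ[X]) - (t : ℚ[X])) :=
    prod_congr rfl fun t _ => by push_cast; ring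
  rw [hp]
  push_cast
  rw [show (2 * (j : ℚ) + 1 + 1) * ((2 * j + 1) * ((2 * j).factorial : ℚ)) =
    ((2 * (j : ℚ) + 1) * (2 * j + 2)) * ((2 * j).factorial : ℚ) by ring, mul_inv, C_mul]
  ring

lemma binomP_two_mul_add_one (y : ℚ[X]) (j : ℕ) :
    binomP ℚ (y + 2 * (j : ℚ[X])) (2 * j + 1) =
      y * (C (2 * (j : ℚ) + 1)⁻¹ * evenBinom y j) := by
  unfold evenBinom binomP
  rw [prod_range_succ, Nat.factorial_succ]
  push_cast
  rw [mul_inv, C_mul]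
  ring

lemma evenBinomDet_comp (y z : ℚ[X]) (n : ℕ) :
    (evenBinomDet y n).comp z = evenBinomDet (y.comp z) n := by
  have h := map_leadingMinor (compRingHom z) (fun i j => evenBinom (y + 2 * (i : ℚ[X])) j) n
  simp only [coe_compRingHom_apply] at h
  rw [evenBinomDet, h]
  refine leadingMinor_congr fun i j => ?_
  simp [evenBinom, binomP, Polynomial.prod_comp]

lemma evenBinomDet_zero (y : ℚ[X]) : evenBinomDet y 0 = 1 := by
  simp [evenBinomDet, leadingMinor]

lemma evenBinomDet_one (y : ℚ[X]) : evenBinomDet y 1 = 1 := by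
  simp [evenBinomDet, leadingMinor, evenBinom, binomP]

lemma evenBinomDet_two : evenBinomDet X 2 = 2 * X + 5 := by
  simp only [evenBinomDet, leadingMinor, Matrix.det_fin_two, Matrix.of_apply, Fin.val_zero,
    Fin.val_one, evenBinom, binomP]
  simp only [mul_one, mul_zero, prod_range_succ, prod_range_zero, Nat.factorial]
  have h : (C (1 / 2 : ℚ) : ℚ[X]) * 2 = 1 := by
    rw [← map_ofNat (C : ℚ →+* ℚ[X]) 2, ← C_mul]; norm_num
  norm_num
  linear_combination (2 * X + 5) * h

lemma leadingMinor_binomP_two_mul_add_one (y : ℚ[X]) (n : ℕ) :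
    leadingMinor (fun i j => binomP ℚ (y + 2 * (i : ℚ[X]) + 2 * (j : ℚ[X])) (2 * j + 1)) n =
      C (∏ j ∈ range n, (2 * (j : ℚ) + 1))⁻¹ * (∏ i ∈ range n, (y + 2 * (i : ℚ[X]))) *
        evenBinomDet y n := by
  simp only [binomP_two_mul_add_one]
  rw [leadingMinor_mul_mul, ← prod_inv_distrib, map_prod, evenBinomDet]
  ring

lemma leadingMinor_evenBinom_succ (y : ℚ[X]) (n : ℕ) :
    leadingMinor (fun i j => evenBinom (y + 2 * (i : ℚ[X])) (j + 1)) n =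
      (∏ i ∈ range n, ((y + 2 * (i : ℚ[X]) + 1) * (y + 2 * (i : ℚ[X]) + 2))) *
        (C (∏ j ∈ range n, ((2 * (j : ℚ) + 1) * (2 * j + 2)))⁻¹ * evenBinomDet (y + 2) n) := by
  simp only [evenBinom_succ]
  rw [leadingMinor_mul_mul, ← prod_inv_distrib, map_prod, evenBinomDet]
  congr 2
  exact leadingMinor_congr fun i j => by rw [add_right_comm]

lemma evenBinomDet_rec (n : ℕ) :
    C ((2 * (n : ℚ) + 1) * (2 * n + 2)) * (evenBinomDet (X + 4) n * evenBinomDet X (n + 2)) =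
      (X + (2 * (n : ℚ[X]) + 3)) * (X + (2 * (n : ℚ[X]) + 4)) * evenBinomDet X (n + 1) *
          evenBinomDet (X + 4) (n + 1) -
        (X + 1) * (X + 2) * evenBinomDet (X + 2) (n + 1) ^ 2 := by
  have hD := leadingMinor_desnanot_jacobi
    (fun i j => evenBinom ((X : ℚ[X]) + 2 * (i : ℚ[X])) j) n
  have hshift : ∀ i : ℕ, (X : ℚ[X]) + 2 * ((i + 1 : ℕ) : ℚ[X]) = X + 2 + 2 * (i : ℚ[X]) := by
    intro i; push_cast; ring
  simp only [hshift] at hD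
  rw [leadingMinor_evenBinom_succ, leadingMinor_evenBinom_succ, leadingMinor_evenBinom_succ] at hD
  change evenBinomDet X (n + 2) * _ = evenBinomDet X (n + 1) * _ -
    evenBinomDet (X + 2) (n + 1) * _ at hD
  rw [prod_range_succ' (fun i : ℕ => ((X : ℚ[X]) + 2 * (i : ℚ[X]) + 1) * (X + 2 * (i : ℚ[X]) + 2)),
    prod_range_succ] at hD
  simp only [hshift] at hD
  rw [prod_range_succ (fun j : ℕ => (2 * (j : ℚ) + 1) * (2 * j + 2)), mul_inv, C_mul,
    show (X : ℚ[X]) + 2 + 2 = X + 4 by ring] at hD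
  set W := ∏ i ∈ range n, (((X : ℚ[X]) + 2 + 2 * (i : ℚ[X]) + 1) * (X + 2 + 2 * (i : ℚ[X]) + 2))
    with hW
  set K := (∏ j ∈ range n, ((2 * (j : ℚ) + 1) * (2 * j + 2)))⁻¹ with hK
  have hK0 : K ≠ 0 := by
    rw [hK]; positivity
  have hW0 : W ≠ 0 := by
    refine prod_ne_zero_iff.mpr fun i _ h0 => ?_
    have h := congrArg (eval 0) h0
    simp at h
    rcases h with h | h <;> linarith [(Nat.cast_nonneg i : (0 : ℚ) ≤ i)]
  have hinv : C ((2 * (n : ℚ) + 1) * (2 * n + 2)) * C ((2 * (n : ℚ) + 1) * (2 * n + 2))⁻¹ =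
      (1 : ℚ[X]) := by
    rw [← C_mul, mul_inv_cancel₀ (by positivity), C_1]
  apply mul_left_cancel₀ (mul_ne_zero hW0 (C_ne_zero.mpr hK0))
  push_cast at hD
  linear_combination C ((2 * (n : ℚ) + 1) * (2 * n + 2)) * hD +
    W * C K * ((X + (2 * (n : ℚ[X]) + 3)) * (X + (2 * (n : ℚ[X]) + 4)) * evenBinomDet X (n + 1) *
          evenBinomDet (X + 4) (n + 1) -
        (X + 1) * (X + 2) * evenBinomDet (X + 2) (n + 1) ^ 2) * hinv

/-! ### The matrices at `q = 1` -/

lemma aF_one (m : ℤ) : aF ℚ 1 m = if Odd m then 1 else 0 := by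
  unfold aF
  split_ifs with h₁ h₂ h₂
  · rw [neg_one_geom_sum, if_neg]
    rw [← Int.even_coe_nat, Int.toNat_of_nonneg h₁.le]
    exact Int.not_even_iff_odd.mpr h₂
  · rw [neg_one_geom_sum, if_pos]
    rw [← Int.even_coe_nat, Int.toNat_of_nonneg h₁.le]
    exact Int.not_odd_iff_even.mp h₂
  all_goals
    have hterm : ∀ l : ℕ, (-1 : ℚ) ^ (-(l + 1 : ℤ)) = -(-1) ^ l := by
      intro l
      rw [zpow_neg, ← Nat.cast_succ, zpow_natCast, ← inv_pow, pow_succ]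
      norm_num
    simp only [hterm, sum_neg_distrib, neg_neg]
    rw [neg_one_geom_sum]
  · rw [if_neg]
    rw [← Int.even_coe_nat, Int.toNat_of_nonneg (by omega), even_neg]
    exact Int.not_even_iff_odd.mpr h₂
  · rw [if_pos]
    rw [← Int.even_coe_nat, Int.toNat_of_nonneg (by omega), even_neg]
    exact Int.not_odd_iff_even.mp h₂

lemma dF_odd (k : ℤ) (n : ℕ) :
    dF ℚ n (2 * k + 1) 1 = evenBinomDet X ((n + 1) / 2) *
      (C (∏ j ∈ range (n / 2), (2 * (j : ℚ) + 1))⁻¹ *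
        (∏ i ∈ range (n / 2), (X + 2 + 2 * (i : ℚ[X]))) * evenBinomDet (X + 2) (n / 2)) := by
  have h : dF ℚ n (2 * k + 1) 1 = leadingMinor (fun i j =>
      binomP ℚ (X + (i : ℚ[X]) + (j : ℚ[X])) j * C (aF ℚ 1 ((j : ℤ) - i + (2 * k + 1)))) n := rfl
  rw [h, leadingMinor_of_odd_eq_zero, ← leadingMinor_binomP_two_mul_add_one, evenBinomDet]
  · congr 1 <;> refine leadingMinor_congr fun i j => ?_
    · rw [aF_one, if_pos ⟨j - i + k, by push_cast; ring⟩, evenBinom]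
      simp
    · rw [aF_one, if_pos ⟨j - i + k, by push_cast; ring⟩]
      push_cast
      rw [C_1, mul_one]
      congr 1
      ring
  · intro i j hij
    rw [aF_one, if_neg, C_0, mul_zero]
    rw [Int.not_odd_iff_even]
    obtain ⟨t, ht⟩ := hij
    exact ⟨t - i + k + 1, by omega⟩

lemma dF_even_eq_leadingMinor (k : ℤ) (n : ℕ) :
    dF ℚ n (2 * k) 1 = leadingMinor (fun i j =>
      binomP ℚ (X + (i : ℚ[X]) + (j : ℚ[X])) j * C (aF ℚ 1 ((j : ℤ) - i + 2 * k))) n := rfl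

lemma aF_one_eq_zero_of_even_add (k : ℤ) {i j : ℕ} (hij : Even (i + j)) :
    aF ℚ 1 ((j : ℤ) - i + 2 * k) = 0 := by
  rw [aF_one, if_neg]
  rw [Int.not_odd_iff_even]
  obtain ⟨t, ht⟩ := hij
  exact ⟨t - i + k, by omega⟩

lemma dF_two_mul_even (k : ℤ) (n : ℕ) :
    dF ℚ (2 * n) (2 * k) 1 = (-1) ^ n * ((C (∏ j ∈ range n, (2 * (j : ℚ) + 1))⁻¹ *
        (∏ i ∈ range n, (X + 1 + 2 * (i : ℚ[X]))) * evenBinomDet (X + 1) n) *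
      evenBinomDet (X + 1) n) := by
  rw [dF_even_eq_leadingMinor, leadingMinor_two_mul_of_even_eq_zero
    (fun i j hij => by rw [aF_one_eq_zero_of_even_add k hij, C_0, mul_zero]),
    ← leadingMinor_binomP_two_mul_add_one]
  congr 2
  · refine leadingMinor_congr fun i j => ?_
    rw [aF_one, if_pos ⟨j - i + k, by push_cast; ring⟩]
    push_cast
    rw [C_1, mul_one]
    congr 1
    ring
  · refine leadingMinor_congr fun i j => ?_
    rw [aF_one, if_pos ⟨j - i + k - 1, by push_cast; ring⟩, evenBinom]
    push_cast
    rw [C_1, mul_one]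
    congr 1
    ring

lemma dF_two_mul_add_one_even (k : ℤ) (n : ℕ) : dF ℚ (2 * n + 1) (2 * k) 1 = 0 := by
  rw [dF_even_eq_leadingMinor]
  exact leadingMinor_odd_of_even_eq_zero
    (fun i j hij => by rw [aF_one_eq_zero_of_even_add k hij, C_0, mul_zero]) n

/-! ### Normalising constants -/

/-- The product of the first `n` odd numbers. -/
def oddProd (n : ℕ) : ℚ := ∏ j ∈ range n, (2 * (j : ℚ) + 1)

/-- The constant by which `evenBinomDet` differs from the normalised polynomials. -/
def normConst (n : ℕ) : ℚ := ∏ j ∈ range n, (oddProd j)⁻¹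

lemma oddProd_pos (n : ℕ) : 0 < oddProd n := by
  unfold oddProd; positivity

lemma normConst_pos (n : ℕ) : 0 < normConst n :=
  prod_pos fun j _ => inv_pos.mpr (oddProd_pos j)

lemma prod_Icc_two_mul_sub_one (n : ℕ) : ∏ i ∈ Icc 2 n, (2 * (i : ℚ) - 1) = oddProd n := by
  induction n with
  | zero => simp [oddProd]
  | succ n ih =>
    rcases n with _ | n
    · simp [oddProd]
    · rw [prod_Icc_succ_top (by omega), ih, oddProd, oddProd, prod_range_succ _ (n + 1)]
      push_cast
      ring

lemma prod_Icc_zpow_succ (n : ℕ) (s : ℤ) :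
    ∏ i ∈ Icc 2 n, (2 * (i : ℚ) - 1) ^ (-(s + 1 - 2 * (i : ℤ))) =
      (∏ i ∈ Icc 2 n, (2 * (i : ℚ) - 1) ^ (-(s - 2 * (i : ℤ)))) * (oddProd n)⁻¹ := by
  rw [← prod_Icc_two_mul_sub_one, ← prod_inv_distrib, ← prod_mul_distrib]
  refine prod_congr rfl fun i hi => ?_
  have hi2 : (2 : ℚ) ≤ i := by exact_mod_cast (mem_Icc.mp hi).1
  rw [← zpow_neg_one (2 * (i : ℚ) - 1), ← zpow_add₀ (by linarith)]
  congr 1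
  ring

lemma prod_Icc_zpow (n : ℕ) :
    ∏ i ∈ Icc 2 n, (2 * (i : ℚ) - 1) ^ (-(2 * (n : ℤ) + 1 - 2 * (i : ℤ))) =
      normConst n ^ 2 * (oddProd n)⁻¹ := by
  induction n with
  | zero => simp [oddProd, normConst]
  | succ n ih =>
    rcases n with _ | n
    · simp [oddProd, normConst]
    · rw [prod_Icc_succ_top (by omega),
        show (2 * ((n + 1 + 1 : ℕ) : ℤ) + 1) = 2 * ((n + 1 : ℕ) : ℤ) + 1 + 1 + 1 by push_cast; ring,
        prod_Icc_zpow_succ, prod_Icc_zpow_succ, ih,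
        show -(2 * ((n + 1 : ℕ) : ℤ) + 1 + 1 + 1 - 2 * ((n + 1 + 1 : ℕ) : ℤ)) = -1 by
          push_cast; ring,
        zpow_neg_one, normConst, normConst, prod_range_succ _ (n + 1), oddProd, oddProd,
        prod_range_succ _ (n + 1)]
      push_cast
      rw [mul_inv, show 2 * ((n : ℚ) + 1 + 1) - 1 = 2 * (n + 1) + 1 by ring]
      ring

/-! ### The normalised polynomials -/

/-- The normalised determinant at the argument `y`. -/
def normDet (y : ℚ[X]) (n : ℕ) : ℚ[X] := C (normConst n)⁻¹ * evenBinomDet y n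

lemma evenBinomDet_eq (y : ℚ[X]) (n : ℕ) : evenBinomDet y n = C (normConst n) * normDet y n := by
  rw [normDet, ← mul_assoc, ← C_mul, mul_inv_cancel₀ (normConst_pos n).ne', C_1, one_mul]

lemma normDet_comp (y z : ℚ[X]) (n : ℕ) : (normDet y n).comp z = normDet (y.comp z) n := by
  rw [normDet, mul_comp, C_comp, evenBinomDet_comp, normDet]

lemma normConst_succ (n : ℕ) : normConst (n + 1) = normConst n * (oddProd n)⁻¹ :=
  prod_range_succ _ _

lemma normDet_rec (n : ℕ) :
    (2 * (n : ℚ[X]) + 2) * normDet (X + 4) n * normDet X (n + 2) =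
      (X + (2 * (n : ℚ[X]) + 3)) * (X + (2 * (n : ℚ[X]) + 4)) * normDet X (n + 1) * normDet (X + 4) (n + 1) -
        (X + 1) * (X + 2) * normDet (X + 2) (n + 1) ^ 2 := by
  have h := evenBinomDet_rec n
  simp only [evenBinomDet_eq] at h
  have hc : ((2 * (n : ℚ) + 1) * (2 * n + 2)) * (normConst n * normConst (n + 2)) =
      (2 * n + 2) * normConst (n + 1) ^ 2 := by
    have ho : oddProd (n + 1) = oddProd n * (2 * n + 1) := prod_range_succ _ _
    rw [normConst_succ (n + 1), normConst_succ, ho]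
    have := (oddProd_pos n).ne'
    have h1 : (2 * (n : ℚ) + 1) ≠ 0 := by positivity
    field_simp
  have hC := congrArg (C : ℚ → ℚ[X]) hc
  simp only [C_mul, C_pow] at hC
  have h2 : (C (2 * (n : ℚ) + 2) : ℚ[X]) = 2 * (n : ℚ[X]) + 2 := by
    simp [map_ofNat (C : ℚ →+* ℚ[X]) 2]
  rw [h2] at hC
  rw [C_mul, h2] at h
  apply mul_left_cancel₀ (pow_ne_zero 2 (C_ne_zero.mpr (normConst_pos (n + 1)).ne'))
  linear_combination h - normDet (X + 4) n * normDet X (n + 2) * hC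

/-- The polynomials `p_m`. -/
def pPoly (m : ℕ) : ℚ[X] :=
  if Even m then normDet (X + 2) (m / 2) else normDet X ((m + 1) / 2)

lemma pPoly_two_mul (m : ℕ) : pPoly (2 * m) = normDet (X + 2) m := by
  rw [pPoly, if_pos (even_two_mul m), Nat.mul_div_cancel_left _ two_pos]

lemma pPoly_two_mul_add_one (m : ℕ) : pPoly (2 * m + 1) = normDet X (m + 1) := by
  rw [pPoly, if_neg (by simp), show (2 * m + 1 + 1) / 2 = m + 1 by omega]

lemma pPoly_mul_pPoly (n : ℕ) (hn : 1 ≤ n) :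
    pPoly n * pPoly (n - 1) = normDet X ((n + 1) / 2) * normDet (X + 2) (n / 2) := by
  obtain ⟨m, rfl | rfl⟩ := Nat.even_or_odd' n
  · obtain ⟨l, rfl⟩ : ∃ l, m = l + 1 := ⟨m - 1, by omega⟩
    rw [show 2 * (l + 1) - 1 = 2 * l + 1 by omega, pPoly_two_mul, pPoly_two_mul_add_one,
      show (2 * (l + 1) + 1) / 2 = l + 1 by omega, show 2 * (l + 1) / 2 = l + 1 by omega, mul_comm]
  · rw [Nat.add_sub_cancel, pPoly_two_mul, pPoly_two_mul_add_one,
      show (2 * m + 1 + 1) / 2 = m + 1 by omega, show (2 * m + 1) / 2 = m by omega]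

lemma prod_Icc_zpow_half (n : ℕ) :
    ∏ i ∈ Icc 2 (n / 2), (2 * (i : ℚ) - 1) ^ (-((n : ℤ) + 1 - 2 * (i : ℤ))) =
      normConst ((n + 1) / 2) * normConst (n / 2) * (oddProd (n / 2))⁻¹ := by
  obtain ⟨m, rfl | rfl⟩ := Nat.even_or_odd' n
  · rw [show (2 * m + 1) / 2 = m by omega, show 2 * m / 2 = m by omega]
    push_cast
    rw [prod_Icc_zpow]
    ring
  · rw [show (2 * m + 1 + 1) / 2 = m + 1 by omega, show (2 * m + 1) / 2 = m by omega]
    push_cast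
    rw [prod_Icc_zpow_succ, prod_Icc_zpow, normConst_succ]
    ring

/-- there are polynomials p_m(x) ∈ ℚ[x] with p_0 = p_1 = 1, p_3 = 2x+5,
p_{2m}(x) = p_{2m-1}(x+2), satisfying the stated recursion, and giving the factorisations
of d_{n,2k+1}(x,1), d_{2n,2k}(x,1) and d_{2n+1,2k}(x,1). -/
theorem statement17 :
    ∃ p : ℕ → Polynomial ℚ,
      p 0 = 1 ∧ p 1 = 1 ∧ p 3 = 2 * Polynomial.X + 5 ∧
      (∀ m : ℕ, 1 ≤ m → p (2 * m) = (p (2 * m - 1)).comp (Polynomial.X + 2)) ∧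
      (∀ m : ℕ, 2 ≤ m →
        (2 * m : Polynomial ℚ) * (p (2 * m - 3)).comp (Polynomial.X + 4) * p (2 * m + 1) =
          (Polynomial.X + (2 * m + 1 : Polynomial ℚ)) *
              (Polynomial.X + (2 * m + 2 : Polynomial ℚ)) *
              p (2 * m - 1) * (p (2 * m - 1)).comp (Polynomial.X + 4) -
            (Polynomial.X + 1) * (Polynomial.X + 2) *
              ((p (2 * m - 1)).comp (Polynomial.X + 2)) ^ 2) ∧
      (∀ k : ℤ, ∀ n : ℕ, 1 ≤ n →
        (dF ℚ n (2 * k + 1) 1 =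
          Polynomial.C (∏ i ∈ Finset.Icc 2 (n / 2),
              (2 * (i : ℚ) - 1) ^ (-((n : ℤ) + 1 - 2 * (i : ℤ)))) *
            (∏ i ∈ Finset.range (n / 2), (Polynomial.X + Polynomial.C (2 * (i : ℚ) + 2))) *
            p n * p (n - 1)) ∧
        (dF ℚ (2 * n) (2 * k) 1 =
          Polynomial.C ((-1 : ℚ) ^ n * ∏ i ∈ Finset.Icc 2 n,
              (2 * (i : ℚ) - 1) ^ (-((2 * (n : ℤ)) + 1 - 2 * (i : ℤ)))) *
            (∏ i ∈ Finset.range n, (Polynomial.X + Polynomial.C (2 * (i : ℚ) + 1))) *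
            ((p (2 * n)).comp (Polynomial.X - 1)) ^ 2) ∧
        (dF ℚ (2 * n + 1) (2 * k) 1 = 0)) := by
  refine ⟨pPoly, ?_, ?_, ?_, ?_, ?_, fun k n hn => ⟨?_, ?_, dF_two_mul_add_one_even k n⟩⟩
  · simpa [normDet, evenBinomDet_zero, normConst] using pPoly_two_mul 0
  · simpa [normDet, evenBinomDet_one, normConst, oddProd] using pPoly_two_mul_add_one 0
  · simpa [normDet, evenBinomDet_two, normConst, oddProd, prod_range_succ] using
      pPoly_two_mul_add_one 1
  · intro m hm
    obtain ⟨l, rfl⟩ : ∃ l, m = l + 1 := ⟨m - 1, by omega⟩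
    rw [show 2 * (l + 1) - 1 = 2 * l + 1 by omega, pPoly_two_mul, pPoly_two_mul_add_one,
      normDet_comp, X_comp]
  · intro m hm
    obtain ⟨l, rfl⟩ : ∃ l, m = l + 2 := ⟨m - 2, by omega⟩
    rw [show 2 * (l + 2) - 3 = 2 * l + 1 by omega, show 2 * (l + 2) - 1 = 2 * (l + 1) + 1 by omega,
      pPoly_two_mul_add_one, pPoly_two_mul_add_one, pPoly_two_mul_add_one,
      normDet_comp, normDet_comp, normDet_comp, X_comp, X_comp]
    have h := normDet_rec (l + 1)
    push_cast at h ⊢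
    linear_combination h
  · rw [dF_odd, prod_Icc_zpow_half, mul_assoc _ (pPoly n), pPoly_mul_pPoly n hn, evenBinomDet_eq,
      evenBinomDet_eq, C_mul, C_mul, oddProd]
    have hp : ∏ i ∈ range (n / 2), (X + C (2 * (i : ℚ) + 2)) =
        ∏ i ∈ range (n / 2), ((X : ℚ[X]) + 2 + 2 * (i : ℚ[X])) :=
      prod_congr rfl fun i _ => by
        simp [map_ofNat (C : ℚ →+* ℚ[X]) 2]; ring
    rw [hp]
    ring
  · rw [dF_two_mul_even, prod_Icc_zpow, pPoly_two_mul, normDet_comp, evenBinomDet_eq, oddProd]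
    have hp : ∏ i ∈ range n, (X + C (2 * (i : ℚ) + 1)) =
        ∏ i ∈ range n, ((X : ℚ[X]) + 1 + 2 * (i : ℚ[X])) :=
      prod_congr rfl fun i _ => by
        simp [map_ofNat (C : ℚ →+* ℚ[X]) 2]; ring
    have hx : ((X : ℚ[X]) + 2).comp (X - 1) = X + 1 := by
      simp; ring
    rw [hp, hx]
    simp only [C_mul, C_pow, C_neg, C_1]
    ring

end
end

section
/- Let q ∈ ℂ be a primitive sixth root of unity and k an integer. Then for every positive integer n the following identity holds in ℂ[x]: d_{n,3−k}(x,q²) = q^{−n} · det_{1≤i,j≤n}( binom(x+i+j−2, j−1) + q^k·δ_{i,j} ), where δ_{i,j} is the Kronecker delta. (Note q² is a primitive third root of unity, so the left-hand side is d_{n,3−k} evaluated at the parameter q².) -/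
open Polynomial Finset

noncomputable section

/-- The truncated Pascal matrix with parameter `s`, whose `(i, j)` entry is
`binom(m+i, m+j) s^(i-j)`. -/
def pascalMatrix {F : Type*} [Field F] (n m : ℕ) (s : F) : Matrix (Fin n) (Fin n) F :=
  Matrix.of fun i j => ((m + i).choose (m + j) : F) * s ^ ((i : ℕ) - (j : ℕ))

section Pascal

variable {F : Type*} [Field F] {n m : ℕ}

theorem pascalMatrix_apply_of_lt (s : F) {i j : Fin n} (h : i < j) :
    pascalMatrix n m s i j = 0 := by
  have : (m + i : ℕ) < m + j := by simpa using h
  simp [pascalMatrix, Nat.choose_eq_zero_of_lt this]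

theorem det_pascalMatrix (s : F) : (pascalMatrix n m s).det = 1 := by
  rw [Matrix.det_of_isLowerTriangular]
  · simp [pascalMatrix]
  · intro i j h
    exact pascalMatrix_apply_of_lt s h

theorem pascalMatrix_zero : pascalMatrix n m (0 : F) = 1 := by
  ext i j
  rcases lt_trichotomy i j with h | rfl | h
  · rw [pascalMatrix_apply_of_lt _ h, Matrix.one_apply_ne h.ne]
  · simp [pascalMatrix]
  · have : (i : ℕ) - (j : ℕ) ≠ 0 := by have : (j : ℕ) < i := h; lia
    simp [pascalMatrix, this, Matrix.one_apply_ne h.ne']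

theorem pascalMatrix_mul (s r : F) :
    pascalMatrix n m s * pascalMatrix n m r = pascalMatrix n m (s + r) := by
  ext i j
  rw [Matrix.mul_apply]
  simp only [pascalMatrix, Matrix.of_apply]
  rw [Fin.sum_univ_eq_sum_range (fun k : ℕ => ((m + i).choose (m + k) : F) * s ^ ((i : ℕ) - k) *
    (((m + k).choose (m + j) : F) * r ^ (k - (j : ℕ)))) n]
  rw [← Finset.sum_subset (s₁ := Finset.Ico (j : ℕ) (i + 1))]
  · rcases lt_or_ge i j with h | h
    · have h' : (i : ℕ) < j := h
      rw [Nat.choose_eq_zero_of_lt (by lia), Finset.Ico_eq_empty (by lia)]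
      simp
    · have h' : (j : ℕ) ≤ i := h
      rw [Finset.sum_Ico_eq_sum_range, add_comm s r, add_pow, Finset.mul_sum,
        show (i : ℕ) + 1 - j = i - j + 1 by lia]
      refine Finset.sum_congr rfl fun l hl => ?_
      have hl' := Finset.mem_range.1 hl
      have key := Nat.choose_mul (n := m + i) (k := m + (j + l)) (s := m + j) (by lia)
      rw [show m + (i : ℕ) - (m + j) = i - j by lia, show m + ((j : ℕ) + l) - (m + j) = l by lia]
        at key
      have key' := congrArg (Nat.cast : ℕ → F) key
      push_cast at key'
      rw [show (i : ℕ) - (j + l) = i - j - l by lia, show (j : ℕ) + l - j = l by lia]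
      linear_combination s ^ ((i : ℕ) - j - l) * r ^ l * key'
  · intro k hk
    have := Finset.mem_Ico.1 hk
    have := i.isLt
    exact Finset.mem_range.2 (by lia)
  · intro k _ hk
    rw [Finset.mem_Ico, not_and_or] at hk
    rcases hk with hk | hk
    · rw [Nat.choose_eq_zero_of_lt (show m + k < m + j by lia)]
      simp
    · rw [Nat.choose_eq_zero_of_lt (show m + (i : ℕ) < m + k by lia)]
      simp

theorem diagonal_mul_pascalMatrix_mul_diagonal_inv {d : F} (hd : d ≠ 0) (s : F) :
    Matrix.diagonal (fun i : Fin n => d ^ (i : ℕ)) * pascalMatrix n m s *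
      Matrix.diagonal (fun i : Fin n => (d ^ (i : ℕ))⁻¹) = pascalMatrix n m (d * s) := by
  ext i j
  rw [Matrix.mul_diagonal, Matrix.diagonal_mul]
  rcases lt_or_ge i j with h | h
  · simp [pascalMatrix_apply_of_lt _ h]
  · obtain ⟨l, hl⟩ := Nat.exists_eq_add_of_le (show (j : ℕ) ≤ i from h)
    simp only [pascalMatrix, Matrix.of_apply, hl, Nat.add_sub_cancel_left]
    field_simp
    ring

/-- Vandermonde's identity as an LU decomposition of the matrix `binom(m+i+j, j)`. -/
theorem pascalMatrix_mul_transpose :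
    pascalMatrix n 0 (1 : F) * (pascalMatrix n m (1 : F)).transpose =
      Matrix.of fun i j : Fin n => ((m + i + j).choose j : F) := by
  ext i j
  rw [Matrix.mul_apply]
  simp only [pascalMatrix, Matrix.of_apply, Matrix.transpose_apply, one_pow, mul_one, zero_add]
  rw [Fin.sum_univ_eq_sum_range (fun k : ℕ => ((i : ℕ).choose k : F) *
    ((m + j).choose (m + k) : F)) n]
  rw [← Finset.sum_subset (s₁ := Finset.range (j + 1))]
  · rw [show m + (i : ℕ) + j = i + (m + j) by lia, Nat.add_choose_eq,
      Finset.Nat.sum_antidiagonal_eq_sum_range_succ_mk]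
    push_cast
    refine Finset.sum_congr rfl fun k hk => ?_
    have := Finset.mem_range.1 hk
    rw [Nat.choose_symm_of_eq_add (show m + (j : ℕ) = (m + k) + (j - k) by lia)]
  · intro k hk
    have := Finset.mem_range.1 hk
    have := j.isLt
    exact Finset.mem_range.2 (by lia)
  · intro k _ hk
    rw [Finset.mem_range] at hk
    rw [Nat.choose_eq_zero_of_lt (show m + (j : ℕ) < m + k by lia)]
    simp

/-- If `q² - q + 1 = 0` and `B = (binom(m+i+j, j))`, `D = diag(qⁱ)`, then
`det (B + t D B D⁻¹) = det (B + t)`. -/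
theorem det_choose_twist {q : F} (hq : q ^ 2 - q + 1 = 0) (t : F) :
    (Matrix.of fun i j : Fin n =>
      ((m + i + j).choose j : F) * (1 + t * (q ^ (i : ℕ) * (q ^ (j : ℕ))⁻¹))).det =
    (Matrix.of fun i j : Fin n =>
      ((m + i + j).choose j : F) + t * (if i = j then 1 else 0)).det := by
  have hq0 : q ≠ 0 := by rintro rfl; simp at hq
  set D := Matrix.diagonal (fun i : Fin n => q ^ (i : ℕ)) with hD
  set E := Matrix.diagonal (fun i : Fin n => (q ^ (i : ℕ))⁻¹) with hE
  have hED : E * D = 1 := by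
    rw [hD, hE, Matrix.diagonal_mul_diagonal]
    simp [hq0]
  have hDE : D * E = 1 := mul_eq_one_comm.1 hED
  have hdetDE : D.det * E.det = 1 := by rw [← Matrix.det_mul, hDE, Matrix.det_one]
  let P (s : F) := pascalMatrix n 0 s
  let U (s : F) := (pascalMatrix n m s).transpose
  have hPP (s r : F) : P s * P r = P (s + r) := pascalMatrix_mul s r
  have hUU (s r : F) : U s * U r = U (s + r) := by
    simp only [U]
    rw [← Matrix.transpose_mul, pascalMatrix_mul, add_comm]
  have hP0 : P 0 = 1 := pascalMatrix_zero
  have hdetP (s : F) : (P s).det = 1 := det_pascalMatrix s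
  have hdetU (s : F) : (U s).det = 1 := by rw [Matrix.det_transpose, det_pascalMatrix]
  have hDP (s : F) : D * P s * E = P (q * s) := diagonal_mul_pascalMatrix_mul_diagonal_inv hq0 s
  have hDU (s : F) : D * U s * E = U (q⁻¹ * s) := by
    simp only [U]
    rw [← diagonal_mul_pascalMatrix_mul_diagonal_inv (inv_ne_zero hq0) s]
    simp [Matrix.transpose_mul, hD, hE, Matrix.mul_assoc]
  have hB : P 1 * U 1 = Matrix.of fun i j : Fin n => ((m + i + j).choose j : F) :=
    pascalMatrix_mul_transpose
  have hleft : (Matrix.of fun i j : Fin n =>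
      ((m + i + j).choose j : F) * (1 + t * (q ^ (i : ℕ) * (q ^ (j : ℕ))⁻¹))) =
      P 1 * (U q + t • P (q ^ 2)) * U q⁻¹ := by
    have hconj : D * (P 1 * U 1) * E = P q * U q⁻¹ := by
      calc D * (P 1 * U 1) * E = D * P 1 * (E * D) * U 1 * E := by
            rw [hED]; simp only [Matrix.mul_assoc, Matrix.one_mul]
        _ = (D * P 1 * E) * (D * U 1 * E) := by simp only [Matrix.mul_assoc]
        _ = P q * U q⁻¹ := by rw [hDP, hDU, mul_one, mul_one]
    have h1 : q + q⁻¹ = 1 := by field_simp; linear_combination hq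
    have h2 : 1 + q ^ 2 = q := by linear_combination hq
    rw [Matrix.mul_add, Matrix.add_mul, Matrix.mul_assoc, hUU, h1, Matrix.mul_smul, hPP, h2,
      Matrix.smul_mul, ← hconj, hB]
    ext i j
    simp only [hD, hE, Matrix.add_apply, Matrix.smul_apply, Matrix.mul_diagonal,
      Matrix.diagonal_mul, Matrix.of_apply, smul_eq_mul]
    ring
  have hright : (Matrix.of fun i j : Fin n =>
      ((m + i + j).choose j : F) + t * (if i = j then 1 else 0)) =
      P 1 * (D * (U q + t • P (q ^ 2)) * E) := by
    have h1 : q⁻¹ * q = 1 := inv_mul_cancel₀ hq0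
    have h3 : 1 + q * q ^ 2 = 0 := by linear_combination (q + 1) * hq
    rw [Matrix.mul_add, Matrix.add_mul, hDU, h1, Matrix.mul_smul, Matrix.smul_mul, hDP,
      Matrix.mul_add, Matrix.mul_smul, hPP, h3, hP0, hB]
    ext i j
    simp [Matrix.one_apply]
  rw [hleft, hright]
  simp only [Matrix.det_mul, hdetP, hdetU]
  linear_combination -(U q + t • P (q ^ 2)).det * hdetDE

end Pascal

theorem aF_mul_one_add {F : Type*} [Field F] {q : F} (hq : q ≠ 0) (m : ℤ) :
    aF F q m * (1 + q) = 1 - (-q) ^ m := by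
  unfold aF
  split_ifs with h
  · obtain ⟨N, rfl⟩ := Int.eq_ofNat_of_zero_le h.le
    simpa using geom_sum_mul_neg (-q) N
  · obtain ⟨N, hN⟩ := Int.eq_ofNat_of_zero_le (show 0 ≤ -m by lia)
    obtain rfl : m = -(N : ℤ) := by lia
    clear h hN
    simp only [neg_neg, Int.toNat_natCast]
    induction N with
    | zero => simp
    | succ N ih =>
      have hq' : -q ≠ 0 := neg_ne_zero.2 hq
      have e : (-q) ^ (-(N : ℤ)) = (-q) ^ (-((N : ℤ) + 1)) * (-q) := by
        rw [← zpow_add_one₀ hq']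
        congr 1
        ring
      rw [Finset.sum_range_succ, Nat.cast_add_one]
      linear_combination ih - e

theorem eval_binomP_natCast {F : Type*} [Field F] [CharZero F] (m i j : ℕ) :
    (binomP F (X + (i : F[X]) + (j : F[X])) j).eval (m : F) = ((m + i + j).choose j : F) := by
  have hprod : ∏ t ∈ Finset.range j, ((m + i + j : ℕ) - (t : F)) =
      ((m + i + j).descFactorial j : F) := by
    rw [← descPochhammer_eval_eq_descFactorial, descPochhammer_eval_eq_prod_range]
  rw [Nat.descFactorial_eq_factorial_mul_choose] at hprod
  push_cast at hprod
  have hj : (j.factorial : F) ≠ 0 := Nat.cast_ne_zero.2 j.factorial_ne_zero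
  simp only [binomP, eval_mul, eval_C, eval_prod, eval_sub, eval_add, eval_X, eval_natCast]
  rw [hprod, inv_mul_cancel_left₀ hj]

theorem IsPrimitiveRoot.sq_sub_self_add_one {F : Type*} [Field F] {q : F}
    (hq : IsPrimitiveRoot q 6) : q ^ 2 - q + 1 = 0 := by
  have h6 := hq.pow_eq_one
  have h3 : q ^ 3 - 1 ≠ 0 := sub_ne_zero.2 (hq.pow_ne_one_of_pos_of_lt (by simp) (by simp))
  have h2 : q + 1 ≠ 0 := fun h =>
    hq.pow_ne_one_of_pos_of_lt (l := 2) (by simp) (by simp) (by linear_combination (q - 1) * h)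
  refine (mul_eq_zero.1 ?_).resolve_left (mul_ne_zero h3 h2)
  linear_combination h6

/-- for q a primitive sixth root of unity and k ∈ ℤ,
d_{n,3-k}(x,q²) = q^{-n}·det( binom(x+i+j-2, j-1) + q^k·δ_{i,j} ). -/
theorem statement18 (q : ℂ) (hq : IsPrimitiveRoot q 6) (k : ℤ) (n : ℕ) (hn : 1 ≤ n) :
    dF ℂ n (3 - k) (q ^ 2) =
      Polynomial.C (q ^ (-(n : ℤ))) *
        Matrix.det (Matrix.of fun i j : Fin n =>
          binomP ℂ (Polynomial.X + ((i : ℕ) : Polynomial ℂ) + ((j : ℕ) : Polynomial ℂ)) (j : ℕ)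
            + Polynomial.C (q ^ k) * (if i = j then 1 else 0)) := by
  have hrel := hq.sq_sub_self_add_one
  have hq0 : q ≠ 0 := hq.ne_zero (by simp)
  have hneg : -(q ^ 2) = q⁻¹ := by field_simp; linear_combination -(q + 1) * hrel
  have ha (i j : ℕ) : aF ℂ (q ^ 2) ((j : ℤ) - (i : ℤ) + (3 - k)) =
      q⁻¹ * (1 + q ^ k * (q ^ i * (q ^ j)⁻¹)) := by
    have h := aF_mul_one_add (pow_ne_zero 2 hq0) ((j : ℤ) - (i : ℤ) + (3 - k))
    have h3 : q ^ (-3 : ℤ) = -1 := by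
      rw [zpow_neg, inv_eq_iff_eq_inv, inv_neg_one]
      rw [show (3 : ℤ) = (3 : ℕ) by rfl, zpow_natCast]
      linear_combination (q + 1) * hrel
    have hpow : q⁻¹ ^ ((j : ℤ) - (i : ℤ) + (3 - k)) = -(q ^ k * (q ^ i * (q ^ j)⁻¹)) := by
      rw [inv_zpow', show -((j : ℤ) - (i : ℤ) + (3 - k)) = k + (i + (-j)) + (-3) by ring,
        zpow_add₀ hq0, zpow_add₀ hq0, zpow_add₀ hq0, h3, zpow_neg, zpow_natCast, zpow_natCast]
      ring
    rw [hneg, hpow, show 1 + q ^ 2 = q by linear_combination hrel] at h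
    rw [eq_inv_mul_iff_mul_eq₀ hq0]
    linear_combination h
  refine Polynomial.eq_of_infinite_eval_eq _ _
    ((Set.infinite_range_of_injective (Nat.cast_injective (R := ℂ))).mono ?_)
  rintro _ ⟨m, rfl⟩
  have hL : (dF ℂ n (3 - k) (q ^ 2)).eval (m : ℂ) = (q⁻¹ • Matrix.of fun i j : Fin n =>
      ((m + i + j).choose j : ℂ) * (1 + q ^ k * (q ^ (i : ℕ) * (q ^ (j : ℕ))⁻¹))).det := by
    rw [dF, ← coe_evalRingHom, RingHom.map_det]
    congr 1
    ext i j
    simp only [RingHom.mapMatrix_apply, Matrix.map_apply, Matrix.of_apply, coe_evalRingHom,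
      eval_mul, eval_C, eval_binomP_natCast, ha, Matrix.smul_apply, smul_eq_mul]
    ring
  rw [Set.mem_ofPred_eq, hL, Matrix.det_smul, det_choose_twist hrel, eval_mul, eval_C,
    Fintype.card_fin, zpow_neg, zpow_natCast, inv_pow]
  congr 1
  rw [← coe_evalRingHom, RingHom.map_det]
  congr 1
  ext i j
  simp only [RingHom.mapMatrix_apply, Matrix.map_apply, Matrix.of_apply, coe_evalRingHom,
    eval_add, eval_mul, eval_C, eval_binomP_natCast]
  split_ifs <;> simp

end
end

section
/- Let K be a field, let q ∈ K with q ≠ 0, and define f(x,y) := qx − q⁻¹y and h(x,y) := x − y. Let w_1,…,w_n, y_1,…,y_n ∈ K be such that h(w_i,y_j) ≠ 0 and f(w_i,y_j) ≠ 0 for all 1 ≤ i,j ≤ n, and such that y_1,…,y_n are pairwise distinct. Then ∑_{σ∈S_n} sgn(σ) · [∏_{1≤i<j≤n} f(w_{σ(i)},w_{σ(j)})] / [∏_{1≤i≤j≤n} h(w_{σ(j)},y_i)·f(w_{σ(i)},y_j)] = det_{1≤i,j≤n}( 1/(f(w_i,y_j)·h(w_i,y_j)) ) / ∏_{1≤i<j≤n}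 h(y_j,y_i). -/
open Finset

/-- A product over the pairs `i < j` of `Fin (n + 1)`, split by whether `i = 0`. -/
lemma prod_filter_lt_fin_succ {M : Type*} [CommMonoid M] (n : ℕ)
    (g : Fin (n + 1) → Fin (n + 1) → M) :
    ∏ p ∈ univ.filter (fun p : Fin (n + 1) × Fin (n + 1) => p.1 < p.2), g p.1 p.2 =
      (∏ j : Fin n, g 0 j.succ) *
        ∏ p ∈ univ.filter (fun p : Fin n × Fin n => p.1 < p.2), g p.1.succ p.2.succ := by
  simp [prod_filter, Fintype.prod_prod_type, Fin.prod_univ_succ]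

/-- A product over the pairs `i ≤ j` of `Fin (n + 1)`, split by whether `i = 0`. -/
lemma prod_filter_le_fin_succ {M : Type*} [CommMonoid M] (n : ℕ)
    (g : Fin (n + 1) → Fin (n + 1) → M) :
    ∏ p ∈ univ.filter (fun p : Fin (n + 1) × Fin (n + 1) => p.1 ≤ p.2), g p.1 p.2 =
      (∏ j : Fin (n + 1), g 0 j) *
        ∏ p ∈ univ.filter (fun p : Fin n × Fin n => p.1 ≤ p.2), g p.1.succ p.2.succ := by
  simp [prod_filter, Fintype.prod_prod_type, Fin.prod_univ_succ]

/-- The permutation of `Fin (n + 1)` sending `0` to `k` and `i.succ` to `k.succAbove (τ i)`. -/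
def permCons {n : ℕ} (k : Fin (n + 1)) (τ : Equiv.Perm (Fin n)) : Equiv.Perm (Fin (n + 1)) :=
  k.cycleRange⁻¹ * Equiv.Perm.decomposeFin.symm (0, τ)

lemma permCons_zero {n : ℕ} (k : Fin (n + 1)) (τ : Equiv.Perm (Fin n)) :
    permCons k τ 0 = k := by
  simp [permCons, Equiv.Perm.inv_def]

lemma permCons_succ {n : ℕ} (k : Fin (n + 1)) (τ : Equiv.Perm (Fin n)) (i : Fin n) :
    permCons k τ i.succ = k.succAbove (τ i) := by
  simp [permCons, Equiv.Perm.inv_def]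

lemma sign_permCons {n : ℕ} (k : Fin (n + 1)) (τ : Equiv.Perm (Fin n)) :
    Equiv.Perm.sign (permCons k τ) = (-1) ^ (k : ℕ) * Equiv.Perm.sign τ := by
  simp [permCons, Fin.sign_cycleRange]

lemma permCons_bijective (n : ℕ) :
    Function.Bijective (fun x : Fin (n + 1) × Equiv.Perm (Fin n) => permCons x.1 x.2) := by
  rw [Fintype.bijective_iff_injective_and_card]
  constructor
  · rintro ⟨k, τ⟩ ⟨l, ρ⟩ h
    have hkl : k = l := by
      simpa [permCons_zero] using congrArg (fun σ : Equiv.Perm (Fin (n + 1)) => σ 0) h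
    subst hkl
    simpa [permCons] using h
  · simp [Fintype.card_perm, Nat.factorial_succ]

/-- Signed sums over permutations of `Fin (n + 1)`, split by the image of `0`. -/
lemma sum_perm_fin_succ {K : Type*} [Field K] (n : ℕ) (F : Equiv.Perm (Fin (n + 1)) → K) :
    ∑ σ : Equiv.Perm (Fin (n + 1)), ((Equiv.Perm.sign σ : ℤ) : K) * F σ =
      ∑ k : Fin (n + 1), (-1) ^ (k : ℕ) *
        ∑ τ : Equiv.Perm (Fin n), ((Equiv.Perm.sign τ : ℤ) : K) * F (permCons k τ) := by
  rw [← (permCons_bijective n).sum_comp, Fintype.sum_prod_type]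
  refine sum_congr rfl fun k _ => ?_
  rw [mul_sum]
  refine sum_congr rfl fun τ _ => ?_
  rw [sign_permCons]
  push_cast
  ring

/-- Partial fraction expansion of `∏ (z - u i) / ∏ (z - y j)` with simple poles. -/
lemma prod_div_prod_eq_sum {K : Type*} [Field K] {n : ℕ} (u : Fin n → K) (y : Fin (n + 1) → K)
    (hy : Function.Injective y) (z : K) (hz : ∀ j, z - y j ≠ 0) :
    (∏ i, (z - u i)) / ∏ j, (z - y j) =
      ∑ j, (∏ i, (u i - y j)) * (∏ i ∈ univ.erase j, (y i - y j)⁻¹) / (z - y j) := by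
  have hdeg : (∏ i, (Polynomial.X - Polynomial.C (u i))).degree <
      ((univ : Finset (Fin (n + 1))).card : WithBot ℕ) := by
    rw [Polynomial.degree_prod]
    simp only [Polynomial.degree_X_sub_C, sum_const, card_univ, Fintype.card_fin, nsmul_eq_mul,
      mul_one]
    exact_mod_cast Nat.lt_succ_self n
  have key := congrArg (Polynomial.eval z)
    (Lagrange.eq_interpolate (s := univ) (v := y) hy.injOn hdeg)
  rw [Lagrange.eval_interpolate_not_at_node _ (fun i _ => sub_ne_zero.1 (hz i)),
    Lagrange.eval_nodal] at key
  simp only [Polynomial.eval_prod, Polynomial.eval_sub, Polynomial.eval_X,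
    Polynomial.eval_C] at key
  rw [key, mul_div_cancel_left₀ _ (prod_ne_zero_iff.2 fun j _ => hz j)]
  refine sum_congr rfl fun j _ => ?_
  have h1 : ∏ i, (y j - u i) = (-1) ^ n * ∏ i, (u i - y j) := by
    simp_rw [← neg_sub _ (y j), prod_neg]
    simp
  have h2 : Lagrange.nodalWeight univ y j =
      (-1) ^ n * ∏ i ∈ univ.erase j, (y i - y j)⁻¹ := by
    rw [Lagrange.nodalWeight]
    simp_rw [← neg_sub _ (y j), inv_neg, prod_neg]
    simp
  have h3 : ((-1 : K) ^ n) * (-1) ^ n = 1 := by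
    rw [← mul_pow]
    simp
  rw [h1, h2, div_eq_mul_inv]
  linear_combination (∏ i ∈ univ.erase j, (y i - y j)⁻¹) * (z - y j)⁻¹ *
    (∏ i, (u i - y j)) * h3

/-- The first column of the recursion as a linear combination of the columns
`1 / (f (w k) (y j) * h (w k) (y j))`. -/
lemma prod_div_eq_sum_column {K : Type*} [Field K] {n : ℕ} (q : K) (hq : q ≠ 0)
    (w y : Fin (n + 1) → K)
    (hh : ∀ i j, w i - y j ≠ 0) (hf : ∀ i j, q * w i - q⁻¹ * y j ≠ 0)
    (hy : Function.Injective y) (k : Fin (n + 1)) :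
    (∏ i, (q * w k - q⁻¹ * w (k.succAbove i))) / ∏ j, (q * w k - q⁻¹ * y j) =
      ∑ j, ((∏ i, (w i - y j)) * ∏ i ∈ univ.erase j, (y i - y j)⁻¹) *
        (1 / ((q * w k - q⁻¹ * y j) * (w k - y j))) := by
  have hfac : ∀ x : K, q * w k - q⁻¹ * x = q⁻¹ * (q ^ 2 * w k - x) := fun x => by
    field_simp
  have hz : ∀ j, q ^ 2 * w k - y j ≠ 0 := fun j h => hf k j (by rw [hfac, h, mul_zero])
  have key := prod_div_prod_eq_sum (fun i => w (k.succAbove i)) y hy _ hz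
  have hL : (∏ i, (q * w k - q⁻¹ * w (k.succAbove i))) / ∏ j, (q * w k - q⁻¹ * y j) =
      q * ((∏ i, (q ^ 2 * w k - w (k.succAbove i))) / ∏ j, (q ^ 2 * w k - y j)) := by
    simp_rw [hfac, prod_mul_distrib]
    have := prod_ne_zero_iff.2 fun j (_ : j ∈ univ) => hz j
    simp only [prod_const, card_univ, Fintype.card_fin, pow_succ]
    field_simp
  rw [hL, key, mul_sum]
  refine sum_congr rfl fun j _ => ?_
  rw [Fin.prod_univ_succAbove (fun i => w i - y j) k, hfac]
  have := hz j
  have := hh k j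
  field_simp


/-- the antisymmetrizer identity, with f(x,y) = qx - q⁻¹y and h(x,y) = x - y:
∑_{σ∈S_n} sgn(σ)·∏_{i<j}f(w_{σ(i)},w_{σ(j)}) / ∏_{i≤j}h(w_{σ(j)},y_i)f(w_{σ(i)},y_j)
= det(1/(f(w_i,y_j)h(w_i,y_j))) / ∏_{i<j}h(y_j,y_i). -/
theorem statement19 {K : Type*} [Field K] (n : ℕ) (q : K) (hq : q ≠ 0)
    (w y : Fin n → K)
    (hh : ∀ i j, w i - y j ≠ 0) (hf : ∀ i j, q * w i - q⁻¹ * y j ≠ 0)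
    (hy : Function.Injective y) :
    ∑ σ : Equiv.Perm (Fin n), ((Equiv.Perm.sign σ : ℤ) : K) *
        ((∏ p ∈ Finset.univ.filter (fun p : Fin n × Fin n => p.1 < p.2),
            (q * w (σ p.1) - q⁻¹ * w (σ p.2))) /
          ∏ p ∈ Finset.univ.filter (fun p : Fin n × Fin n => p.1 ≤ p.2),
            ((w (σ p.2) - y p.1) * (q * w (σ p.1) - q⁻¹ * y p.2))) =
      Matrix.det (Matrix.of fun i j : Fin n =>
          1 / ((q * w i - q⁻¹ * y j) * (w i - y j))) /
        ∏ p ∈ Finset.univ.filter (fun p : Fin n × Fin n => p.1 < p.2), (y p.2 - y p.1) := by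
  induction n with
  | zero => simp
  | succ n ih =>
    set A : Matrix (Fin (n + 1)) (Fin (n + 1)) K := Matrix.of fun i j =>
      1 / ((q * w i - q⁻¹ * y j) * (w i - y j)) with hA
    set H : K := ∏ j, (w j - y 0) with hH
    have hH0 : H ≠ 0 := prod_ne_zero_iff.2 fun j _ => hh j 0
    set b : Fin (n + 1) → K := fun j =>
      H⁻¹ * ((∏ i, (w i - y j)) * ∏ i ∈ univ.erase j, (y i - y j)⁻¹) with hb
    have hb0 : b 0 = (∏ j : Fin n, (y j.succ - y 0))⁻¹ := by
      have herase : (univ : Finset (Fin (n + 1))).erase 0 = univ.image Fin.succ := by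
        ext i
        cases i using Fin.cases <;> simp
      simp only [hb]
      rw [← hH, inv_mul_cancel_left₀ hH0, herase,
        prod_image fun _ _ _ _ h => Fin.succ_injective n h, prod_inv_distrib]
    have hdet := Matrix.det_updateCol_sum A 0 b
    rw [Matrix.det_succ_column_zero, hb0] at hdet
    rw [prod_filter_lt_fin_succ n fun i j => y j - y i, ← div_div, div_eq_inv_mul A.det,
      ← smul_eq_mul, ← hdet, sum_perm_fin_succ, sum_div]
    refine sum_congr rfl fun k _ => ?_
    have hcol : ∑ j, b j • A k j =
        (∏ i, (q * w k - q⁻¹ * w (k.succAbove i))) / (H * ∏ j, (q * w k - q⁻¹ * y j)) := by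
      rw [mul_comm H, ← div_div, prod_div_eq_sum_column q hq w y hh hf hy k, div_eq_inv_mul,
        mul_sum]
      simp [hb, hA, mul_assoc]
    have hsub : (A.updateCol 0 fun k => ∑ i, b i • A k i).submatrix k.succAbove Fin.succ =
        Matrix.of fun i j : Fin n => 1 / ((q * w (k.succAbove i) - q⁻¹ * y j.succ) *
          (w (k.succAbove i) - y j.succ)) := by
      ext i j
      simp [hA]
    rw [hsub, Matrix.updateCol_self, hcol, mul_assoc, mul_div_assoc, mul_div_assoc,
      ← ih (fun i => w (k.succAbove i)) (fun j => y j.succ) (fun i j => hh _ _)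
        (fun i j => hf _ _) (hy.comp (Fin.succ_injective n))]
    congr 1
    rw [mul_sum]
    refine sum_congr rfl fun τ _ => ?_
    rw [prod_filter_lt_fin_succ n fun i j =>
        q * w (permCons k τ i) - q⁻¹ * w (permCons k τ j),
      prod_filter_le_fin_succ n fun i j =>
        (w (permCons k τ j) - y i) * (q * w (permCons k τ i) - q⁻¹ * y j), prod_mul_distrib,
      Equiv.prod_comp (permCons k τ) fun j => w j - y 0]
    simp only [permCons_zero, permCons_succ]
    rw [Equiv.prod_comp τ fun j => q * w k - q⁻¹ * w (k.succAbove j), ← hH, mul_div_mul_comm]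
    ring
end
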